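/- Let (R, m) be a d-dimensional complete Noetherian local domain of prime characteristic p with absolute integral closure R^+, and let x_1, …, x_d be a system of parameters of R. Then for every 1 ≤ n ≤ d and every y ∈ R, there exists a positive integer N_0 such that (x_1, …, x_n)R^+ = a ∩ b, where a = (x_1, …, x_n, y^{N_0})R^+ and b = (x_1, …, x_n)R^+ :_{R^+} y^{N_0}. -/

import Mathlib

open IsLocalRing TensorProduct
set_option synthInstance.maxHeartbeats 1000000
set_option maxHeartbeats 1000000

/-- The absolute integral closure `R⁺` of a domain `R`: the integral closure of `R`
in an algebraic closure of its fraction field. -/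
noncomputable abbrev RPlus (R : Type) [CommRing R] [IsDomain R] : Type :=
  ↥(integralClosure R (AlgebraicClosure (FractionRing R)))

/-- A system of parameters of a local ring: `d` elements generating an ideal whose
radical is the maximal ideal, where `d` is the Krull dimension. -/
def IsSOP (R : Type) [CommRing R] [IsLocalRing R] {d : ℕ} (x : Fin d → R) : Prop :=
  ringKrullDim R = d ∧ (Ideal.span (Set.range x)).radical = maximalIdeal R

set_option linter.unusedSectionVars false
section Colon

variable {T E : Type} [CommRing T] [AddCommMonoid E]

/-- the ideal generated by `pw i (e i)`, `i ∈ J` -/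
def Isp (pw : ℕ → E → T) (J : Finset ℕ) (e : ℕ → E) : Ideal T :=
  Ideal.span ((fun i => pw i (e i)) '' (J : Set ℕ))

/-- all "powers" regular up to `n` -/
def HReg (pw : ℕ → E → T) (n : ℕ) : Prop :=
  ∀ j < n, ∀ (e : ℕ → E) (b : E) (w : T),
    pw j b * w ∈ Isp pw (Finset.range j) e → w ∈ Isp pw (Finset.range j) e

variable {pw : ℕ → E → T}

lemma Isp_congr {J : Finset ℕ} {e e' : ℕ → E} (h : ∀ i ∈ J, e i = e' i) :
    Isp pw J e = Isp pw J e' := by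
  unfold Isp
  congr 1
  apply Set.image_congr
  intro i hi
  rw [h i hi]

lemma Isp_mono {J K : Finset ℕ} {e : ℕ → E} (h : J ⊆ K) : Isp pw J e ≤ Isp pw K e :=
  Ideal.span_mono (Set.image_mono (by exact_mod_cast h))

lemma mem_Isp_of_mem {J : Finset ℕ} {e : ℕ → E} {i : ℕ} (h : i ∈ J) :
    pw i (e i) ∈ Isp pw J e :=
  Ideal.subset_span ⟨i, h, rfl⟩

lemma mem_Isp_insert {J : Finset ℕ} {e : ℕ → E} {j : ℕ} {w : T} :
    w ∈ Isp pw (insert j J) e ↔ ∃ t v, v ∈ Isp pw J e ∧ w = t * pw j (e j) + v := by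
  unfold Isp
  rw [Finset.coe_insert, Set.image_insert_eq, Ideal.mem_span_insert]

lemma range_eq_insert_erase {n j : ℕ} (h : j < n) :
    Finset.range n = insert j ((Finset.range n).erase j) := by
  rw [Finset.insert_erase (Finset.mem_range.2 h)]

lemma mem_Isp_range {n j : ℕ} (h : j < n) {e : ℕ → E} {w : T} :
    w ∈ Isp pw (Finset.range n) e ↔
      ∃ t v, v ∈ Isp pw ((Finset.range n).erase j) e ∧ w = t * pw j (e j) + v := by
  conv_lhs => rw [range_eq_insert_erase h]
  exact mem_Isp_insert

lemma erase_succ {n j : ℕ} (h : j < n) :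
    (Finset.range (n+1)).erase j = insert n ((Finset.range n).erase j) := by
  ext i; simp only [Finset.mem_erase, Finset.mem_range, Finset.mem_insert]; omega

lemma HReg.mono {n m : ℕ} (h : HReg pw n) (hm : m ≤ n) : HReg pw m :=
  fun j hj => h j (by omega)

lemma HReg.erase {n : ℕ} (h : HReg pw n) :
    ∀ j < n, ∀ (e : ℕ → E) (b : E) (w : T),
      pw j b * w ∈ Isp pw ((Finset.range n).erase j) e →
        w ∈ Isp pw ((Finset.range n).erase j) e := by
  induction n with
  | zero => intro j hj; omega
  | succ n ih =>
    intro j hj e b w hw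
    rcases Nat.lt_succ_iff_lt_or_eq.1 hj with hj' | rfl
    · rw [erase_succ hj'] at hw ⊢
      obtain ⟨s, v, hv, hs⟩ := mem_Isp_insert.1 hw
      have hup : Isp pw ((Finset.range n).erase j) (Function.update e j b) =
          Isp pw ((Finset.range n).erase j) e := by
        apply Isp_congr
        intro i hi
        rw [Function.update_of_ne (Finset.ne_of_mem_erase hi)]
      have h1 : pw n (e n) * s ∈ Isp pw (Finset.range n) (Function.update e j b) := by
        rw [mem_Isp_range hj', hup]
        refine ⟨w, -v, neg_mem hv, ?_⟩
        rw [Function.update_self]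
        linear_combination -hs
      have h2 := h n (by omega) _ _ _ h1
      rw [mem_Isp_range hj', hup, Function.update_self] at h2
      obtain ⟨t, v', hv', hs'⟩ := h2
      have h3 : w - t * pw n (e n) ∈ Isp pw ((Finset.range n).erase j) e := by
        apply ih (h.mono (by omega)) j hj' e b
        have : pw j b * (w - t * pw n (e n)) = v + v' * pw n (e n) := by
          rw [hs'] at hs; linear_combination hs
        rw [this]
        exact add_mem hv (Ideal.mul_mem_right _ _ hv')
      exact mem_Isp_insert.2 ⟨t, _, h3, by ring⟩
    · have : (Finset.range (j+1)).erase j = Finset.range j := by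
        ext i; simp only [Finset.mem_erase, Finset.mem_range]; omega
      rw [this] at hw ⊢
      exact h j (by omega) e b w hw

lemma HReg.cancel (hadd : ∀ i a b, pw i (a + b) = pw i a * pw i b) {n : ℕ} (h : HReg pw n)
    {j : ℕ} (hj : j < n) (e : ℕ → E) (c : E) (w : T)
    (hw : pw j c * w ∈ Isp pw (Finset.range n) (Function.update e j (e j + c))) :
    w ∈ Isp pw (Finset.range n) e := by
  have hup : Isp pw ((Finset.range n).erase j) (Function.update e j (e j + c)) =
      Isp pw ((Finset.range n).erase j) e := by
    apply Isp_congr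
    intro i hi
    rw [Function.update_of_ne (Finset.ne_of_mem_erase hi)]
  rw [mem_Isp_range hj, hup, Function.update_self, hadd] at hw
  obtain ⟨t, v, hv, hs⟩ := hw
  rw [mem_Isp_range hj]
  refine ⟨t, w - t * pw j (e j), h.erase j hj e c _ ?_, by ring⟩
  convert hv using 1
  linear_combination hs

/-- exponents raised by `c` below `k` -/
def upto (k : ℕ) (e c : ℕ → E) : ℕ → E := fun i => if i < k then e i + c i else e i

lemma upto_succ (k : ℕ) (e c : ℕ → E) :
    upto (k+1) e c = Function.update (upto k e c) k (upto k e c k + c k) := by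
  funext i
  unfold upto
  rcases eq_or_ne i k with rfl | hi
  · simp
  · rw [Function.update_of_ne hi]
    have : i < k + 1 ↔ i < k := by omega
    simp only [this]

lemma HReg.cancel_prod (hadd : ∀ i a b, pw i (a + b) = pw i a * pw i b) {n : ℕ} (h : HReg pw n)
    (k : ℕ) (hk : k ≤ n) (e c : ℕ → E) (w : T)
    (hw : (∏ i ∈ Finset.range k, pw i (c i)) * w ∈ Isp pw (Finset.range n) (upto k e c)) :
    w ∈ Isp pw (Finset.range n) e := by
  induction k generalizing w with
  | zero =>
    have h0 : upto 0 e c = e := by funext i; simp [upto]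
    simpa [h0] using hw
  | succ k ih =>
    apply ih (by omega)
    rw [upto_succ, Finset.prod_range_succ] at hw
    apply h.cancel hadd (j := k) (by omega) _ (c k)
    convert hw using 1; ring

lemma mul_prod_mem (hadd : ∀ i a b, pw i (a + b) = pw i a * pw i b) (n k : ℕ)
    (e c : ℕ → E) (w : T) (hw : w ∈ Isp pw (Finset.range n) e) :
    (∏ i ∈ Finset.range k, pw i (c i)) * w ∈ Isp pw (Finset.range n) (upto k e c) := by
  unfold Isp at hw
  induction hw using Submodule.span_induction with
  | mem x hx =>
    obtain ⟨i, hi, rfl⟩ := hx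
    have hi' : i < n := by simpa using hi
    by_cases hik : i < k
    · have h1 := mem_Isp_of_mem (pw := pw) (e := upto k e c) (Finset.mem_range.2 hi')
      rw [upto, if_pos hik, hadd] at h1
      rw [← Finset.mul_prod_erase _ _ (Finset.mem_range.2 hik)]
      have := Ideal.mul_mem_left _ (∏ x ∈ (Finset.range k).erase i, pw x (c x)) h1
      convert this using 1; ring
    · have h1 := mem_Isp_of_mem (pw := pw) (e := upto k e c) (Finset.mem_range.2 hi')
      rw [upto, if_neg hik] at h1
      exact Ideal.mul_mem_left _ _ h1
  | zero => simp
  | add x y _ _ hx hy => rw [mul_add]; exact add_mem hx hy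
  | smul a x _ hx =>
    rw [smul_eq_mul, mul_left_comm]; exact Ideal.mul_mem_left _ _ hx

lemma HReg.factor (hadd : ∀ i a b, pw i (a + b) = pw i a * pw i b) {n : ℕ} (h : HReg pw n)
    (a N : ℕ → E) (w : T)
    (hw : ∀ i < n, pw i (N i) * w ∈ Isp pw (Finset.range n) (a + N)) :
    ∃ v, w - (∏ i ∈ Finset.range n, pw i (a i)) * v ∈ Isp pw (Finset.range n) (a + N) := by
  suffices ∀ k ≤ n, ∃ v, w - (∏ i ∈ Finset.range k, pw i (a i)) * v ∈
      Isp pw (Finset.range n) (a + N) from this n le_rfl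
  intro k hk
  induction k with
  | zero => exact ⟨w, by simp⟩
  | succ k ih =>
    obtain ⟨v, hv⟩ := ih (by omega)
    -- exponents with `N` below `k` and `a + N` above
    let e : ℕ → E := fun i => if i < k then N i else a i + N i
    have he : Isp pw (Finset.range n) (upto k e a) = Isp pw (Finset.range n) (a + N) := by
      apply Isp_congr
      intro i hi
      simp only [upto, e, Pi.add_apply]
      split_ifs
      · rw [add_comm]
      · rfl
    have h1 : pw k (N k) * v ∈ Isp pw (Finset.range n) e := by
      apply h.cancel_prod hadd k (by omega) e a
      rw [he]
      have := sub_mem (hw k (by omega)) (Ideal.mul_mem_left _ (pw k (N k)) hv)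
      convert this using 1; ring
    rw [mem_Isp_range (j := k) (by omega)] at h1
    obtain ⟨t, u, hu, hs⟩ := h1
    have hek : e k = a k + N k := by simp [e]
    rw [hek, hadd] at hs
    have h2 : v - pw k (a k) * t ∈ Isp pw ((Finset.range n).erase k) e := by
      apply h.erase k (by omega) e (N k)
      convert hu using 1
      linear_combination hs
    have h3 := mul_prod_mem hadd n k e a _ (Isp_mono (Finset.erase_subset _ _) h2)
    rw [he] at h3
    refine ⟨t, ?_⟩
    have := add_mem hv h3
    convert this using 1
    rw [Finset.prod_range_succ]; ring

end Colon

section TSeq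

variable (B L : Type) [CommRing B] [Field L] [Algebra B L]

/-- sequences in `L` all lying in a common finite `B`-subalgebra -/
def Tsub : Subalgebra B (ℕ → L) where
  carrier := {w | ∃ R : Subalgebra B L, Module.Finite B R ∧ ∀ i, w i ∈ R}
  mul_mem' := by
    rintro a b ⟨R, hR, ha⟩ ⟨R', hR', hb⟩
    exact ⟨R ⊔ R', Subalgebra.finite_sup R R', fun i =>
      mul_mem ((le_sup_left : R ≤ R ⊔ R') (ha i)) ((le_sup_right : R' ≤ R ⊔ R') (hb i))⟩
  add_mem' := by
    rintro a b ⟨R, hR, ha⟩ ⟨R', hR', hb⟩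
    exact ⟨R ⊔ R', Subalgebra.finite_sup R R', fun i =>
      add_mem ((le_sup_left : R ≤ R ⊔ R') (ha i)) ((le_sup_right : R' ≤ R ⊔ R') (hb i))⟩
  algebraMap_mem' := fun r => ⟨⊥, inferInstance, fun i => Subalgebra.algebraMap_mem _ _⟩

variable {B L}

lemma mem_Tsub_of_finset (s : Finset L) (hs : ∀ x ∈ s, IsIntegral B x) (w : ℕ → L)
    (hw : ∀ i, w i ∈ Algebra.adjoin B (s : Set L)) : w ∈ Tsub B L :=
  ⟨Algebra.adjoin B (s : Set L), Module.Finite.iff_fg.2 (fg_adjoin_of_finite s.finite_toSet hs), hw⟩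

lemma isIntegral_of_Tsub {w : ℕ → L} (hw : w ∈ Tsub B L) (i : ℕ) : IsIntegral B (w i) := by
  obtain ⟨R, hR, h⟩ := hw
  exact (IsIntegral.of_finite B (⟨w i, h i⟩ : R)).map R.val

lemma const_mem_Tsub {x : L} (hx : IsIntegral B x) : (fun _ => x) ∈ Tsub B L :=
  ⟨Algebra.adjoin B {x}, hx.fg_adjoin_singleton |> fun h => Module.Finite.iff_fg.2 h,
    fun _ => Algebra.self_mem_adjoin_singleton B x⟩

lemma mem_span_range_iff {T : Type} [CommRing T] (f : ℕ → T) (n : ℕ) (w : T) :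
    w ∈ Ideal.span (f '' ((Finset.range n : Finset ℕ) : Set ℕ)) ↔
      ∃ c : ℕ → T, w = ∑ i ∈ Finset.range n, c i * f i := by
  constructor
  · intro h
    induction n generalizing w with
    | zero => simp at h; exact ⟨0, by simp [h]⟩
    | succ n ih =>
      rw [Finset.range_add_one, Finset.coe_insert, Set.image_insert_eq,
        Ideal.mem_span_insert] at h
      obtain ⟨a, v, hv, rfl⟩ := h
      obtain ⟨c, rfl⟩ := ih v hv
      refine ⟨Function.update c n a, ?_⟩
      rw [Finset.sum_range_succ, Function.update_self, add_comm]
      congr 1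
      apply Finset.sum_congr rfl
      intro i hi
      rw [Function.update_of_ne (Finset.mem_range.1 hi).ne]
  · rintro ⟨c, rfl⟩
    exact sum_mem fun i hi => Ideal.mul_mem_left _ _ (Ideal.subset_span ⟨i, hi, rfl⟩)

/-- powers of `z` in sequences -/
def pwT (z : ℕ → B) (i : ℕ) (e : ℕ → ℕ) : Tsub B L :=
  ⟨fun ι => algebraMap B L (z i ^ e ι), ⊥, inferInstance, fun _ => Subalgebra.algebraMap_mem _ _⟩

lemma pwT_add (z : ℕ → B) (i : ℕ) (a b : ℕ → ℕ) :
    (pwT z i (a + b) : Tsub B L) = pwT z i a * pwT z i b := by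
  apply Subtype.ext
  funext ι
  simp [pwT, pow_add]

lemma mem_Isp_T {z : ℕ → B} {n : ℕ} {a : ℕ → ℕ → ℕ} {w : Tsub B L} :
    w ∈ Isp (pwT z) (Finset.range n) a ↔
      ∃ c : ℕ → Tsub B L, ∀ ι, w.1 ι = ∑ i ∈ Finset.range n,
        (c i).1 ι * algebraMap B L (z i) ^ a i ι := by
  unfold Isp
  rw [mem_span_range_iff (fun i => pwT z i (a i))]
  refine exists_congr fun c => ?_
  rw [Subtype.ext_iff, funext_iff]
  refine forall_congr' fun ι => ?_
  have : (∑ i ∈ Finset.range n, c i * pwT z i (a i) : Tsub B L).1 ι =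
      ∑ i ∈ Finset.range n, (c i).1 ι * algebraMap B L (z i) ^ a i ι := by
    rw [AddSubmonoidClass.coe_finsetSum, Finset.sum_apply]
    simp [pwT]
  rw [this]

end TSeq

section HH

variable {B L : Type} [CommRing B] [Field L] [Algebra B L]

/-- local splitting hypothesis -/
def Split (B L : Type) [CommRing B] [Field L] [Algebra B L] (c : B) : Prop :=
  ∀ R : Subalgebra B L, Module.Finite B R → ∃ N m : ℕ, ∃ f : Fin m → (R →ₗ[B] B),
    ∃ s : Fin m → L, (∀ j, IsIntegral B (s j)) ∧
      ∀ r : R, algebraMap B L (c ^ N) * (r : L) = ∑ j, algebraMap B L (f j r) * s j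

lemma exists_common (c : ℕ → Tsub B L) (n : ℕ) (w : Tsub B L) :
    ∃ R : Subalgebra B L, Module.Finite B R ∧ (∀ ι, w.1 ι ∈ R) ∧
      ∀ i < n, ∀ ι, (c i).1 ι ∈ R := by
  induction n with
  | zero =>
    obtain ⟨R, h, h'⟩ := w.2
    exact ⟨R, h, h', by simp⟩
  | succ n ih =>
    obtain ⟨R, h, h1, h2⟩ := ih
    obtain ⟨R', h', h3⟩ := (c n).2
    refine ⟨R ⊔ R', Subalgebra.finite_sup R R',
      fun ι => (le_sup_left : R ≤ R ⊔ R') (h1 ι), fun i hi ι => ?_⟩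
    rcases Nat.lt_succ_iff_lt_or_eq.1 hi with hi | rfl
    · exact (le_sup_left : R ≤ R ⊔ R') (h2 i hi ι)
    · exact (le_sup_right : R' ≤ R ⊔ R') (h3 ι)

/-- one step: multiply by a splitting element -/
lemma HH_mul {z : ℕ → B} {k n : ℕ} (hnk : n < k)
    (hz : HReg (fun i (e : ℕ) => z i ^ e) k)
    (hinj : Function.Injective (algebraMap B L))
    (a : ℕ → ℕ → ℕ) (b : ℕ → ℕ) (w : Tsub B L)
    (hw : pwT z n b * w ∈ Isp (pwT z) (Finset.range n) a)
    (c : ℕ) (hsp : Split B L (z c)) :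
    ∃ N : ℕ, pwT z c (fun _ => N) * w ∈ Isp (pwT z) (Finset.range n) a := by
  obtain ⟨co, hco⟩ := mem_Isp_T.1 hw
  obtain ⟨R, hR, hwR, hcR⟩ := exists_common co n w
  obtain ⟨N, m, f, s, hs, hf⟩ := hsp R hR
  refine ⟨N, ?_⟩
  have h1 : ∀ ι j, ∃ g : ℕ → B, f j ⟨w.1 ι, hwR ι⟩ =
      ∑ i ∈ Finset.range n, g i * z i ^ a i ι := by
    intro ι j
    have h2 : z n ^ b ι * f j ⟨w.1 ι, hwR ι⟩ ∈
        Isp (fun i (e : ℕ) => z i ^ e) (Finset.range n) (fun i => a i ι) := by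
      unfold Isp
      rw [mem_span_range_iff (fun i => z i ^ a i ι)]
      refine ⟨fun i => if h : i < n then f j ⟨(co i).1 ι, hcR i h ι⟩ else 0, ?_⟩
      have h3 : (z n ^ b ι) • (⟨w.1 ι, hwR ι⟩ : R) =
          ∑ i ∈ Finset.range n, (z i ^ a i ι) •
            (if h : i < n then ⟨(co i).1 ι, hcR i h ι⟩ else 0 : R) := by
        apply Subtype.ext
        rw [AddSubmonoidClass.coe_finsetSum]
        have := hco ι
        have e1 : (pwT z n b * w : Tsub B L).1 ι = algebraMap B L (z n) ^ b ι * w.1 ι := by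
          simp [pwT]
        rw [e1] at this
        rw [SetLike.val_smul, Algebra.smul_def, map_pow, this]
        apply Finset.sum_congr rfl
        intro i hi
        rw [dif_pos (Finset.mem_range.1 hi), SetLike.val_smul, Algebra.smul_def, map_pow, mul_comm]
      have h4 := congrArg (f j) h3
      rw [map_smul, map_sum, smul_eq_mul] at h4
      rw [h4]
      apply Finset.sum_congr rfl
      intro i hi
      beta_reduce
      rw [map_smul, dif_pos (Finset.mem_range.1 hi), dif_pos (Finset.mem_range.1 hi),
        smul_eq_mul, mul_comm]
    have h5 := hz n hnk _ _ _ h2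
    unfold Isp at h5
    rwa [mem_span_range_iff (fun i => z i ^ a i ι)] at h5
  choose g hg using h1
  rw [mem_Isp_T]
  classical
  have hT : ∀ i, (fun ι => ∑ j, algebraMap B L (g ι j i) * s j) ∈ Tsub B L := by
    intro i
    apply mem_Tsub_of_finset (Finset.univ.image s)
    · intro x hx
      obtain ⟨j, -, rfl⟩ := Finset.mem_image.1 hx
      exact hs j
    · intro ι
      refine sum_mem fun j _ => mul_mem (Subalgebra.algebraMap_mem _ _)
        (Algebra.subset_adjoin ?_)
      simp
  refine ⟨fun i => ⟨_, hT i⟩, fun ι => ?_⟩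
  have e1 : (pwT z c (fun _ => N) * w : Tsub B L).1 ι = algebraMap B L (z c ^ N) * w.1 ι := by
    simp [pwT]
  rw [e1]
  have := hf ⟨w.1 ι, hwR ι⟩
  simp only at this
  rw [this]
  simp only [hg, map_sum, map_mul, map_pow, Finset.sum_mul]
  rw [Finset.sum_comm]
  apply Finset.sum_congr rfl
  intro i _
  apply Finset.sum_congr rfl
  intro j _
  ring

lemma upto_eq_add {E : Type} [AddCommMonoid E] {T : Type} [CommRing T] (pw : ℕ → E → T)
    (n : ℕ) (a c : ℕ → E) :
    Isp pw (Finset.range n) (upto n a c) = Isp pw (Finset.range n) (a + c) := by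
  apply Isp_congr
  intro i hi
  simp [upto, Finset.mem_range.1 hi]

lemma HH_factor {z : ℕ → B} {k n : ℕ} (hnk : n < k)
    (hz : HReg (fun i (e : ℕ) => z i ^ e) k)
    (hinj : Function.Injective (algebraMap B L))
    (hsp : ∀ i < k, Split B L (z i))
    (ih : HReg (pwT z : ℕ → (ℕ → ℕ) → Tsub B L) n)
    (a : ℕ → ℕ → ℕ) (b : ℕ → ℕ) (w : Tsub B L)
    (hw : pwT z n b * w ∈ Isp (pwT z) (Finset.range n) a) :
    ∃ (N : ℕ) (v : Tsub B L), (∏ i ∈ Finset.range n, pwT z i (fun _ => N)) * w -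
      (∏ i ∈ Finset.range n, pwT z i (a i)) * v ∈
        Isp (pwT z) (Finset.range n) (a + fun _ _ => N) := by
  have h1 : ∀ i, ∃ N, i < n → pwT z i (fun _ => N) * w ∈ Isp (pwT z) (Finset.range n) a := by
    intro i
    by_cases hi : i < n
    · obtain ⟨N, hN⟩ := HH_mul hnk hz hinj a b w hw i (hsp i (by omega))
      exact ⟨N, fun _ => hN⟩
    · exact ⟨0, fun h => absurd h hi⟩
  choose M hM using h1
  let N := ∑ i ∈ Finset.range n, M i
  have h2 : ∀ i < n, pwT z i (fun _ => N) * w ∈ Isp (pwT z) (Finset.range n) a := by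
    intro i hi
    have hle : M i ≤ N := Finset.single_le_sum (f := M) (fun _ _ => Nat.zero_le _)
      (Finset.mem_range.2 hi)
    have : (fun _ => N : ℕ → ℕ) = (fun _ => N - M i) + (fun _ => M i) := by
      funext ι; simp only [Pi.add_apply]; omega
    rw [this, pwT_add, mul_assoc]
    exact Ideal.mul_mem_left _ _ (hM i hi)
  refine ⟨N, ih.factor (pwT_add z) a (fun _ _ => N) _ fun i hi => ?_⟩
  have := mul_prod_mem (pwT_add z) n n a (fun _ _ => N) _ (h2 i hi)
  rw [upto_eq_add] at this
  convert this using 1; ring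

end HH

section HH2

variable {B L : Type} [CommRing B] [Field L] [Algebra B L]

/-- integrality from an additive-type equation -/
lemma int_of_eq (p s : ℕ) (hp : 1 < p) (al : ℕ → L) (c x : L)
    (hal : ∀ i < s, IsIntegral B (al i)) (hc : IsIntegral B c)
    (hx : x ^ p ^ s = ∑ i ∈ Finset.range s, al i * x ^ p ^ i + c) : IsIntegral B x := by
  let S := integralClosure B L
  have : IsIntegral S x := by
    let al' : ℕ → S := fun i => if h : i < s then ⟨al i, hal i h⟩ else 0
    let c' : S := ⟨c, hc⟩
    let q : Polynomial S := ∑ i ∈ Finset.range s, Polynomial.C (al' i) * Polynomial.X ^ p ^ i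
      + Polynomial.C c'
    have hq : q.degree < (p ^ s : ℕ) := by
      apply lt_of_le_of_lt (Polynomial.degree_add_le _ _)
      rw [max_lt_iff]
      constructor
      · rw [← Polynomial.mem_degreeLT]
        refine sum_mem fun i hi => ?_
        rw [Polynomial.mem_degreeLT]
        refine lt_of_le_of_lt (Polynomial.degree_C_mul_X_pow_le _ _) ?_
        exact_mod_cast Nat.pow_lt_pow_right hp (Finset.mem_range.1 hi)
      · refine lt_of_le_of_lt Polynomial.degree_C_le ?_
        exact_mod_cast pow_pos (by omega) s
    refine ⟨Polynomial.X ^ p ^ s - q, Polynomial.monic_X_pow_sub hq, ?_⟩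
    rw [Polynomial.eval₂_sub, Polynomial.eval₂_X_pow, hx, sub_eq_zero]
    simp only [q, Polynomial.eval₂_add, Polynomial.eval₂_finsetSum, Polynomial.eval₂_mul,
      Polynomial.eval₂_C, Polynomial.eval₂_X_pow]
    congr 1
    apply Finset.sum_congr rfl
    intro i hi
    have : al' i = ⟨al i, hal i (Finset.mem_range.1 hi)⟩ := by
      simp only [al', dif_pos (Finset.mem_range.1 hi)]
    rw [this]; rfl
  exact isIntegral_trans (R := B) (A := S) x this

lemma exists_root_add [IsAlgClosed L] (p s : ℕ) (hp : 1 < p) (al : ℕ → L) (c : L) :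
    ∃ x : L, x ^ p ^ s = ∑ i ∈ Finset.range s, al i * x ^ p ^ i + c := by
  let q : Polynomial L := ∑ i ∈ Finset.range s, Polynomial.C (al i) * Polynomial.X ^ p ^ i
      + Polynomial.C c
  have hq : q.degree < (p ^ s : ℕ) := by
    apply lt_of_le_of_lt (Polynomial.degree_add_le _ _)
    rw [max_lt_iff]
    constructor
    · rw [← Polynomial.mem_degreeLT]
      refine sum_mem fun i hi => ?_
      rw [Polynomial.mem_degreeLT]
      refine lt_of_le_of_lt (Polynomial.degree_C_mul_X_pow_le _ _) ?_
      exact_mod_cast Nat.pow_lt_pow_right hp (Finset.mem_range.1 hi)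
    · refine lt_of_le_of_lt Polynomial.degree_C_le ?_
      exact_mod_cast pow_pos (by omega) s
  have hd : (Polynomial.X ^ p ^ s - q).degree = ((p ^ s : ℕ) : WithBot ℕ) :=
    (Polynomial.degree_sub_eq_left_of_degree_lt (by rwa [Polynomial.degree_X_pow])).trans
      (Polynomial.degree_X_pow _)
  obtain ⟨x, hx⟩ := IsAlgClosed.exists_root (Polynomial.X ^ p ^ s - q) (by
    rw [hd]
    have : 0 < p ^ s := pow_pos (by omega) s
    exact_mod_cast this.ne')
  refine ⟨x, ?_⟩
  rw [Polynomial.IsRoot.def, Polynomial.eval_sub, Polynomial.eval_pow, Polynomial.eval_X,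
    sub_eq_zero] at hx
  rw [hx]
  simp [q, Polynomial.eval_finsetSum]

/-- the solution can be chosen with the same denominators -/
lemma exists_root_den [IsAlgClosed L] (p s : ℕ) (hp : 1 < p) (al : ℕ → L)
    (hal : ∀ i < s, IsIntegral B (al i)) (c D : L) (hD : IsIntegral B D)
    (hc : IsIntegral B (D * c)) :
    ∃ x : L, x ^ p ^ s = ∑ i ∈ Finset.range s, al i * x ^ p ^ i + c ∧ IsIntegral B (D * x) := by
  obtain ⟨x, hx⟩ := exists_root_add p s hp al c
  refine ⟨x, hx, ?_⟩
  have hle : ∀ i ≤ s, p ^ i ≤ p ^ s := fun i hi => Nat.pow_le_pow_right (by omega) hi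
  refine int_of_eq p s hp (fun i => al i * D ^ (p ^ s - p ^ i)) (D ^ (p ^ s - 1) * (D * c)) _
    (fun i hi => (hal i hi).mul (hD.pow _)) ((hD.pow _).mul hc) ?_
  have h1 : D ^ (p ^ s - 1) * (D * c) = D ^ p ^ s * c := by
    rw [← mul_assoc, ← pow_succ]
    congr 2
    have : 0 < p ^ s := pow_pos (by omega) s
    omega
  rw [h1, mul_pow, hx, mul_add, Finset.mul_sum]
  congr 1
  apply Finset.sum_congr rfl
  intro i hi
  have h2 : D ^ p ^ s = D ^ (p ^ s - p ^ i) * D ^ p ^ i := by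
    rw [← pow_add]; congr 1; have := hle i (Finset.mem_range.1 hi).le; omega
  rw [h2, mul_pow]; ring

/-- a sequence in a Noetherian module is eventually dependent on earlier terms -/
lemma exists_dep [IsNoetherianRing B] {M : Type} [AddCommGroup M] [Module B M] [Module.Finite B M]
    (v : ℕ → M) : ∃ (s : ℕ) (al : ℕ → B), v s = ∑ i ∈ Finset.range s, al i • v i := by
  let f : ℕ →o Submodule B M :=
    ⟨fun n => Submodule.span B (v '' (Finset.range n : Set ℕ)), fun a b hab =>
      Submodule.span_mono (Set.image_mono (by
        exact_mod_cast Finset.range_mono hab))⟩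
  obtain ⟨s, hs⟩ := monotone_stabilizes_iff_noetherian.2 (inferInstance : IsNoetherian B M) f
  have h1 : v s ∈ f (s+1) := Submodule.subset_span ⟨s, by simp, rfl⟩
  rw [← hs (s+1) (by omega)] at h1
  have h2 : v s ∈ Submodule.span B (v '' (Finset.range s : Set ℕ)) := h1
  rw [Submodule.mem_span_image_finset_iff_exists_fun] at h2
  obtain ⟨c, hc⟩ := h2
  refine ⟨s, fun i => if h : i ∈ Finset.range s then c ⟨i, h⟩ else 0, ?_⟩
  rw [← hc, ← Finset.sum_attach (Finset.range s)]
  apply Finset.sum_congr rfl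
  intro i _
  beta_reduce
  rw [dif_pos i.2]

end HH2

section HH3

variable {B L : Type} [CommRing B] [Field L] [Algebra B L]

lemma coe_prod_T (z : ℕ → B) (J : Finset ℕ) (e : ℕ → ℕ → ℕ) (ι : ℕ) :
    (∏ i ∈ J, (pwT z i (e i) : Tsub B L)).1 ι = ∏ i ∈ J, algebraMap B L (z i) ^ e i ι := by
  rw [SubmonoidClass.coe_finsetProd, Finset.prod_apply]
  simp [pwT]

/-- cancellation for single elements -/
lemma const_cancel {z : ℕ → B} {n : ℕ} (ih : HReg (pwT z : ℕ → (ℕ → ℕ) → Tsub B L) n)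
    (a e : ℕ → ℕ) (u : L) (hu : IsIntegral B u) (ka : ℕ → L) (hka : ∀ i < n, IsIntegral B (ka i))
    (h : (∏ i ∈ Finset.range n, algebraMap B L (z i) ^ e i) * u =
      ∑ i ∈ Finset.range n, ka i * algebraMap B L (z i) ^ (a i + e i)) :
    ∃ ka' : ℕ → L, (∀ i, IsIntegral B (ka' i)) ∧
      u = ∑ i ∈ Finset.range n, ka' i * algebraMap B L (z i) ^ a i := by
  have h1 : (⟨fun _ => u, const_mem_Tsub hu⟩ : Tsub B L) ∈
      Isp (pwT z) (Finset.range n) (fun i _ => a i) := by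
    apply ih.cancel_prod (pwT_add z) n le_rfl _ (fun i _ => e i)
    rw [upto_eq_add, mem_Isp_T]
    refine ⟨fun i => if hi : i < n then ⟨fun _ => ka i, const_mem_Tsub (hka i hi)⟩ else 0,
      fun ι => ?_⟩
    have e1 : (((∏ i ∈ Finset.range n, pwT z i (fun _ => e i)) *
        (⟨fun _ => u, const_mem_Tsub hu⟩ : Tsub B L) : Tsub B L)).1 ι =
        (∏ i ∈ Finset.range n, algebraMap B L (z i) ^ e i) * u := by
      rw [MulMemClass.coe_mul, Pi.mul_apply, coe_prod_T]
    rw [e1, h]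
    apply Finset.sum_congr rfl
    intro i hi
    beta_reduce
    rw [dif_pos (Finset.mem_range.1 hi)]
    simp
  obtain ⟨c, hc⟩ := mem_Isp_T.1 h1
  exact ⟨fun i => (c i).1 0, fun i => isIntegral_of_Tsub (c i).2 0, hc 0⟩

lemma HH_const [IsNoetherianRing B] [IsAlgClosed L] (p : ℕ) [Fact p.Prime] [CharP L p]
    {z : ℕ → B} {k n : ℕ} (hnk : n < k)
    (hz : HReg (fun i (e : ℕ) => z i ^ e) k)
    (hinj : Function.Injective (algebraMap B L))
    (hsp : ∀ i < k, Split B L (z i)) (hz0 : ∀ i < k, z i ≠ 0)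
    (ih : HReg (pwT z : ℕ → (ℕ → ℕ) → Tsub B L) n)
    (a : ℕ → ℕ) (b : ℕ) (u : L) (hu : IsIntegral B u) (co : ℕ → L)
    (hco : ∀ i, IsIntegral B (co i))
    (h : algebraMap B L (z n) ^ b * u =
      ∑ i ∈ Finset.range n, co i * algebraMap B L (z i) ^ a i) :
    ∃ ka' : ℕ → L, (∀ i, IsIntegral B (ka' i)) ∧
      u = ∑ i ∈ Finset.range n, ka' i * algebraMap B L (z i) ^ a i := by
  set Z : ℕ → L := fun i => algebraMap B L (z i) with hZ
  have hZ0 : ∀ i < k, Z i ≠ 0 := fun i hi => by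
    simpa [hZ, map_eq_zero_iff _ hinj] using hz0 i hi
  have hZint : ∀ i, IsIntegral B (Z i) := fun i => isIntegral_algebraMap
  have hp : 1 < p := (Fact.out : p.Prime).one_lt
  rcases Nat.eq_zero_or_pos n with rfl | hn
  · refine ⟨0, fun _ => isIntegral_zero, ?_⟩
    simp only [Finset.range_zero, Finset.sum_empty] at h ⊢
    exact (mul_eq_zero.1 h).resolve_left (pow_ne_zero _ (hZ0 0 hnk))
  have hpowT : ∀ x : L, IsIntegral B x → (fun ε => x ^ p ^ ε) ∈ Tsub B L := fun x hx =>
    ⟨Algebra.adjoin B {x}, Module.Finite.iff_fg.2 hx.fg_adjoin_singleton,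
    fun _ => pow_mem (Algebra.self_mem_adjoin_singleton B x) _⟩
  have hw : pwT z n (fun ε => b * p ^ ε) * ⟨fun ε => u ^ p ^ ε, hpowT u hu⟩ ∈
      Isp (pwT z) (Finset.range n) (fun i ε => a i * p ^ ε) := by
    rw [mem_Isp_T]
    refine ⟨fun i => ⟨fun ε => co i ^ p ^ ε, hpowT _ (hco i)⟩, fun ε => ?_⟩
    have := congrArg (fun t => t ^ p ^ ε) h
    beta_reduce at this
    rw [sum_pow_char_pow, mul_pow, ← pow_mul] at this
    simp only [mul_pow, ← pow_mul] at this
    rw [← this]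
    simp [pwT, hZ]
  obtain ⟨N, v, hv⟩ := HH_factor hnk hz hinj hsp ih _ _ _ hw
  obtain ⟨c, hc⟩ := mem_Isp_T.1 hv
  obtain ⟨R, hR, hvR⟩ := v.2
  obtain ⟨s, al, hal⟩ := exists_dep (B := B) (M := R) (fun i => ⟨v.1 i, hvR i⟩)
  have hal' : v.1 s = ∑ i ∈ Finset.range s, algebraMap B L (al i) * v.1 i := by
    have := congrArg (Subtype.val) hal
    rw [AddSubmonoidClass.coe_finsetSum] at this
    simpa [Algebra.smul_def] using this
  set A : ℕ → L := fun i => algebraMap B L (al i) with hA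
  have hAint : ∀ i, IsIntegral B (A i) := fun i => isIntegral_algebraMap
  set ZN : L := ∏ i ∈ Finset.range n, Z i ^ N with hZN
  set Pi' : L := ∏ i ∈ Finset.range n, Z i ^ a i with hPi
  have hPpow : ∀ q, Pi' ^ q = ∏ i ∈ Finset.range n, Z i ^ (a i * q) := fun q => by
    rw [hPi, ← Finset.prod_pow]
    exact Finset.prod_congr rfl fun i _ => (pow_mul _ _ _).symm
  have hZN0 : ZN ≠ 0 := Finset.prod_ne_zero_iff.2 fun i hi =>
    pow_ne_zero _ (hZ0 i (by have := Finset.mem_range.1 hi; omega))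
  have hP0 : Pi' ≠ 0 := Finset.prod_ne_zero_iff.2 fun i hi =>
    pow_ne_zero _ (hZ0 i (by have := Finset.mem_range.1 hi; omega))
  have hc' : ∀ ε, ZN * u ^ p ^ ε - Pi' ^ p ^ ε * v.1 ε =
      ∑ i ∈ Finset.range n, (c i).1 ε * Z i ^ (a i * p ^ ε + N) := by
    intro ε
    have := hc ε
    rw [AddSubgroupClass.coe_sub, Pi.sub_apply, MulMemClass.coe_mul, MulMemClass.coe_mul,
      Pi.mul_apply, Pi.mul_apply, coe_prod_T, coe_prod_T] at this
    rw [hPpow, hZN]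
    exact this
  -- theta
  set θ : L := u / Pi' with hθ
  let γ : ℕ → ℕ → L := fun j ε => (c j).1 ε * Z j ^ (a j * p ^ ε + N) / (ZN * Pi' ^ p ^ ε)
  have hθq : ∀ ε, θ ^ p ^ ε = v.1 ε / ZN + ∑ j ∈ Finset.range n, γ j ε := by
    intro ε
    have : ∑ j ∈ Finset.range n, γ j ε = (ZN * u ^ p ^ ε - Pi' ^ p ^ ε * v.1 ε) /
        (ZN * Pi' ^ p ^ ε) := by
      rw [hc' ε, Finset.sum_div]
    rw [this, hθ, div_pow]
    have : Pi' ^ p ^ ε ≠ 0 := pow_ne_zero _ hP0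
    field_simp
    ring
  let D : ℕ → L := fun j => ∏ i ∈ (Finset.range n).erase j, Z i ^ (a i * p ^ s + N)
  have hDint : ∀ j, IsIntegral B (D j) := fun j =>
    IsIntegral.prod _ fun i _ => (hZint i).pow _
  have hDγ : ∀ j < n, ∀ ε ≤ s, IsIntegral B (D j * γ j ε) := by
    intro j hj ε hε
    have hle : p ^ ε ≤ p ^ s := Nat.pow_le_pow_right (by omega) hε
    have e1 : ZN * Pi' ^ p ^ ε = Z j ^ (a j * p ^ ε + N) *
        ∏ i ∈ (Finset.range n).erase j, Z i ^ (a i * p ^ ε + N) := by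
      rw [hPpow, hZN, ← Finset.prod_mul_distrib, ← Finset.mul_prod_erase _ _
        (Finset.mem_range.2 hj), ← pow_add, add_comm N]
      congr 1
      exact Finset.prod_congr rfl fun i _ => by rw [← pow_add, add_comm N]
    have e2 : D j = (∏ i ∈ (Finset.range n).erase j, Z i ^ (a i * p ^ s - a i * p ^ ε)) *
        ∏ i ∈ (Finset.range n).erase j, Z i ^ (a i * p ^ ε + N) := by
      rw [← Finset.prod_mul_distrib]
      refine Finset.prod_congr rfl fun i _ => ?_
      rw [← pow_add]
      congr 1
      have := Nat.mul_le_mul_left (a i) hle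
      omega
    have hne : (∏ i ∈ (Finset.range n).erase j, Z i ^ (a i * p ^ ε + N)) ≠ 0 :=
      Finset.prod_ne_zero_iff.2 fun i hi => pow_ne_zero _ (hZ0 i (by
        have := Finset.mem_range.1 (Finset.mem_of_mem_erase hi); omega))
    have hne' : Z j ^ (a j * p ^ ε + N) ≠ 0 := pow_ne_zero _ (hZ0 j (by omega))
    have e3 : D j * γ j ε =
        (∏ i ∈ (Finset.range n).erase j, Z i ^ (a i * p ^ s - a i * p ^ ε)) * (c j).1 ε := by
      simp only [γ]
      rw [e1, e2]
      field_simp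
    rw [e3]
    exact (IsIntegral.prod _ fun i _ => (hZint i).pow _).mul (isIntegral_of_Tsub (c j).2 ε)
  let β : ℕ → L := fun j => γ j s - ∑ ε ∈ Finset.range s, A ε * γ j ε
  have hDβ : ∀ j < n, IsIntegral B (D j * β j) := by
    intro j hj
    simp only [β]
    rw [mul_sub, Finset.mul_sum]
    refine (hDγ j hj s le_rfl).sub (IsIntegral.sum _ fun ε hε => ?_)
    rw [mul_left_comm]
    exact (hAint ε).mul (hDγ j hj ε (Finset.mem_range.1 hε).le)
  have hζ : ∀ j, ∃ x : L, j < n → (x ^ p ^ s = ∑ i ∈ Finset.range s, A i * x ^ p ^ i + β j ∧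
      IsIntegral B (D j * x)) := by
    intro j
    by_cases hj : j < n
    · obtain ⟨x, hx⟩ := exists_root_den (B := B) p s hp A (fun i _ => hAint i) (β j) (D j)
        (hDint j) (hDβ j hj)
      exact ⟨x, fun _ => hx⟩
    · exact ⟨0, fun h => absurd h hj⟩
  choose ζ hζ using hζ
  have hη : IsIntegral B (θ - ∑ j ∈ Finset.range n, ζ j) := by
    refine int_of_eq (B := B) p s hp A 0 _ (fun i _ => hAint i) isIntegral_zero ?_
    have e1 : ∀ ε, (θ - ∑ j ∈ Finset.range n, ζ j) ^ p ^ ε =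
        θ ^ p ^ ε - ∑ j ∈ Finset.range n, ζ j ^ p ^ ε := by
      intro ε
      rw [sub_pow_char_pow, sum_pow_char_pow]
    simp only [e1, hθq]
    rw [Finset.sum_congr rfl fun j hj => (hζ j (Finset.mem_range.1 hj)).1, hal']
    simp only [β, mul_sub, mul_add, Finset.sum_sub_distrib, Finset.sum_add_distrib,
      Finset.mul_sum, Finset.sum_div]
    rw [Finset.sum_comm (s := Finset.range n) (t := Finset.range s) (f := fun j i => A i * γ j i),
      Finset.sum_comm (s := Finset.range n) (t := Finset.range s)
        (f := fun j i => A i * ζ j ^ p ^ i)]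
    simp only [mul_div_assoc]
    ring
  refine const_cancel ih a (fun i => a i * p ^ s + N) u hu
    (fun j => (∏ i ∈ (Finset.range n).erase j, Z i ^ a i) * (D j * ζ j) +
      if j = 0 then (∏ i ∈ (Finset.range n).erase j, Z i ^ a i) * D j *
        (θ - ∑ j ∈ Finset.range n, ζ j) else 0) ?_ ?_
  · intro j hj
    refine IsIntegral.add ((IsIntegral.prod _ fun i _ => (hZint i).pow _).mul (hζ j hj).2) ?_
    split_ifs
    · exact ((IsIntegral.prod _ fun i _ => (hZint i).pow _).mul (hDint j)).mul hη
    · exact isIntegral_zero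
  · set ZE : L := ∏ i ∈ Finset.range n, Z i ^ (a i * p ^ s + N) with hZE
    have hu' : u = Pi' * ((θ - ∑ j ∈ Finset.range n, ζ j) + ∑ j ∈ Finset.range n, ζ j) := by
      rw [sub_add_cancel, hθ]; field_simp
    have key : ∀ j < n, ZE * Pi' = Z j ^ (a j + (a j * p ^ s + N)) *
        ((∏ i ∈ (Finset.range n).erase j, Z i ^ a i) * D j) := by
      intro j hj
      rw [hZE, hPi, ← Finset.mul_prod_erase _ _ (Finset.mem_range.2 hj),
        ← Finset.mul_prod_erase (Finset.range n) (fun i => Z i ^ a i) (Finset.mem_range.2 hj),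
        pow_add]
      ring
    simp only [add_mul, ite_mul, zero_mul, Finset.sum_add_distrib, Finset.sum_ite_eq',
      Finset.mem_range, hn, if_true]
    have t1 : ∑ j ∈ Finset.range n, ((∏ i ∈ (Finset.range n).erase j, Z i ^ a i) * (D j * ζ j)) *
        Z j ^ (a j + (a j * p ^ s + N)) = ∑ j ∈ Finset.range n, ZE * Pi' * ζ j :=
      Finset.sum_congr rfl fun j hj => by rw [key j (Finset.mem_range.1 hj)]; ring
    rw [t1, ← Finset.mul_sum]
    have t2 := key 0 hn
    conv_lhs => rw [hu']
    linear_combination (θ - ∑ j ∈ Finset.range n, ζ j) * t2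

end HH3

section HH4

variable {B L : Type} [CommRing B] [Field L] [Algebra B L]

lemma HH_step [IsNoetherianRing B] [IsAlgClosed L] (p : ℕ) [Fact p.Prime] [CharP L p]
    {z : ℕ → B} {k n : ℕ} (hnk : n < k)
    (hz : HReg (fun i (e : ℕ) => z i ^ e) k)
    (hinj : Function.Injective (algebraMap B L))
    (hsp : ∀ i < k, Split B L (z i)) (hz0 : ∀ i < k, z i ≠ 0)
    (ih : HReg (pwT z : ℕ → (ℕ → ℕ) → Tsub B L) n)
    (a : ℕ → ℕ → ℕ) (b : ℕ → ℕ) (w : Tsub B L)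
    (hw : pwT z n b * w ∈ Isp (pwT z) (Finset.range n) a) :
    w ∈ Isp (pwT z) (Finset.range n) a := by
  set Z : ℕ → L := fun i => algebraMap B L (z i) with hZ
  obtain ⟨N, v, hv⟩ := HH_factor hnk hz hinj hsp ih _ _ _ hw
  obtain ⟨co, hco⟩ := mem_Isp_T.1 hw
  obtain ⟨c, hc⟩ := mem_Isp_T.1 hv
  have h1 : ∀ ι, ∃ ka' : ℕ → L, (∀ i, IsIntegral B (ka' i)) ∧
      w.1 ι = ∑ i ∈ Finset.range n, ka' i * Z i ^ a i ι := by
    intro ι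
    refine HH_const p hnk hz hinj hsp hz0 ih (fun i => a i ι) (b ι) (w.1 ι)
      (isIntegral_of_Tsub w.2 ι) (fun i => (co i).1 ι) (fun i => isIntegral_of_Tsub (co i).2 ι) ?_
    rw [← hco ι]
    simp [pwT]
  have h2 : ∀ ι, ∃ ka' : ℕ → L, (∀ i, IsIntegral B (ka' i)) ∧
      v.1 ι = ∑ i ∈ Finset.range n, ka' i * Z i ^ N := by
    intro ι
    obtain ⟨ka, hka, hk⟩ := h1 ι
    refine const_cancel ih (fun _ => N) (fun i => a i ι) (v.1 ι) (isIntegral_of_Tsub v.2 ι)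
      (fun j => (∏ i ∈ (Finset.range n).erase j, Z i ^ N) * ka j - (c j).1 ι) ?_ ?_
    · intro i _
      exact ((IsIntegral.prod _ fun i _ => isIntegral_algebraMap.pow _).mul (hka i)).sub
        (isIntegral_of_Tsub (c i).2 ι)
    · have := hc ι
      rw [AddSubgroupClass.coe_sub, Pi.sub_apply, MulMemClass.coe_mul, MulMemClass.coe_mul,
        Pi.mul_apply, Pi.mul_apply, coe_prod_T, coe_prod_T, hk, sub_eq_iff_eq_add'] at this
      simp only [sub_mul, Finset.sum_sub_distrib]
      have e2 : ∑ j ∈ Finset.range n, (∏ i ∈ (Finset.range n).erase j, Z i ^ N) * ka j *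
          algebraMap B L (z j) ^ (N + a j ι) = (∏ i ∈ Finset.range n, Z i ^ N) *
            ∑ i ∈ Finset.range n, ka i * Z i ^ a i ι := by
        rw [Finset.mul_sum]
        refine Finset.sum_congr rfl fun j hj => ?_
        rw [← Finset.mul_prod_erase _ _ hj, pow_add]
        ring
      have e3 : ∑ j ∈ Finset.range n, (c j).1 ι * algebraMap B L (z j) ^ (N + a j ι) =
          ∑ i ∈ Finset.range n, (c i).1 ι * algebraMap B L (z i) ^ (a + (fun _ _ => N : ℕ → ℕ → ℕ)) i ι := by
        refine Finset.sum_congr rfl fun j hj => ?_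
        simp [add_comm]
      rw [e2, e3, eq_sub_iff_add_eq]
      exact this.symm
  -- uniformity
  have h3 : v ∈ Isp (pwT z) (Finset.range n) (fun _ _ => N) := by
    obtain ⟨R, hR, hvR⟩ := v.2
    let M : Submodule B R := Submodule.span B (Set.range fun ι => (⟨v.1 ι, hvR ι⟩ : R))
    have hfg : ∃ (m : ℕ), Submodule.span B (Set.range fun i : Fin m =>
        (⟨v.1 i, hvR i⟩ : R)) = M := by
      let f : ℕ →o Submodule B R :=
        ⟨fun m => Submodule.span B (Set.range fun i : Fin m => (⟨v.1 i, hvR i⟩ : R)), by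
          intro a b hab
          apply Submodule.span_mono
          rintro _ ⟨i, rfl⟩
          exact ⟨⟨i, by omega⟩, rfl⟩⟩
      obtain ⟨m, hm⟩ := monotone_stabilizes_iff_noetherian.2 (inferInstance : IsNoetherian B R) f
      refine ⟨m, le_antisymm (Submodule.span_mono ?_) (Submodule.span_le.2 ?_)⟩
      · rintro _ ⟨i, rfl⟩
        exact ⟨i, rfl⟩
      · rintro _ ⟨ι, rfl⟩
        have : (⟨v.1 ι, hvR ι⟩ : R) ∈ f (max m (ι + 1)) :=
          Submodule.subset_span ⟨⟨ι, by omega⟩, rfl⟩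
        rw [← hm _ (le_max_left _ _)] at this
        exact this
    obtain ⟨m, hm⟩ := hfg
    have h4 : ∀ ι, ∃ g : Fin m → B, v.1 ι = ∑ j, algebraMap B L (g j) * v.1 j := by
      intro ι
      have : (⟨v.1 ι, hvR ι⟩ : R) ∈ M := Submodule.subset_span ⟨ι, rfl⟩
      rw [← hm, Submodule.mem_span_range_iff_exists_fun] at this
      obtain ⟨g, hg⟩ := this
      refine ⟨g, ?_⟩
      have := congrArg Subtype.val hg
      rw [AddSubmonoidClass.coe_finsetSum] at this
      simpa [Algebra.smul_def] using this.symm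
    choose g hg using h4
    choose ka hka hk using h2
    rw [mem_Isp_T]
    classical
    have hT : ∀ i, (fun ι => ∑ j : Fin m, algebraMap B L (g ι j) * ka j i) ∈ Tsub B L := by
      intro i
      apply mem_Tsub_of_finset (Finset.univ.image fun j : Fin m => ka j i)
      · intro x hx
        obtain ⟨j, -, rfl⟩ := Finset.mem_image.1 hx
        exact hka j i
      · intro ι
        refine sum_mem fun j _ => mul_mem (Subalgebra.algebraMap_mem _ _)
          (Algebra.subset_adjoin ?_)
        rw [Finset.coe_image]
        exact ⟨j, by simp, rfl⟩
    refine ⟨fun i => ⟨_, hT i⟩, fun ι => ?_⟩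
    rw [hg ι]
    simp only [Finset.sum_mul]
    rw [Finset.sum_comm]
    refine Finset.sum_congr rfl fun j _ => ?_
    conv_lhs => rw [hk j]
    rw [Finset.mul_sum]
    refine Finset.sum_congr rfl fun i _ => ?_
    simp only [hZ]
    ring
  apply ih.cancel_prod (pwT_add z) n le_rfl _ (fun _ _ => N)
  rw [upto_eq_add]
  have h5 := mul_prod_mem (pwT_add z) n n (fun _ _ => N) a _ h3
  rw [upto_eq_add, add_comm] at h5
  have := add_mem hv h5
  rwa [sub_add_cancel] at this

theorem HH_main [IsNoetherianRing B] [IsAlgClosed L] (p : ℕ) [Fact p.Prime] [CharP L p]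
    {z : ℕ → B} {k : ℕ}
    (hz : HReg (fun i (e : ℕ) => z i ^ e) k)
    (hinj : Function.Injective (algebraMap B L))
    (hsp : ∀ i < k, Split B L (z i)) (hz0 : ∀ i < k, z i ≠ 0) :
    HReg (pwT z : ℕ → (ℕ → ℕ) → Tsub B L) k := by
  suffices ∀ n ≤ k, HReg (pwT z : ℕ → (ℕ → ℕ) → Tsub B L) n from this k le_rfl
  intro n
  induction n with
  | zero => intro _ j hj; omega
  | succ n ih =>
    intro hn j hj
    rcases Nat.lt_succ_iff_lt_or_eq.1 hj with hj' | rfl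
    · exact ih (by omega) j hj'
    · exact HH_step p (by omega) hz hinj hsp hz0 (ih (by omega))

/-- regularity on the integral closure -/
theorem HH_S [IsNoetherianRing B] [IsAlgClosed L] (p : ℕ) [Fact p.Prime] [CharP L p]
    {z : ℕ → B} {k : ℕ}
    (hz : HReg (fun i (e : ℕ) => z i ^ e) k)
    (hinj : Function.Injective (algebraMap B L))
    (hsp : ∀ i < k, Split B L (z i)) (hz0 : ∀ i < k, z i ≠ 0)
    (n : ℕ) (hn : n < k) (u : integralClosure B L) (co : ℕ → integralClosure B L)
    (h : z n • u = ∑ i ∈ Finset.range n, z i • co i) :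
    ∃ co' : ℕ → integralClosure B L, u = ∑ i ∈ Finset.range n, z i • co' i := by
  have hT := (HH_main p hz hinj hsp hz0).mono hn.le
  obtain ⟨ka, hka, hk⟩ := HH_const p hn hz hinj hsp hz0 hT (fun _ => 1) 1 u.1 u.2
    (fun i => (co i).1) (fun i => (co i).2) (by
      have := congrArg Subtype.val h
      rw [AddSubmonoidClass.coe_finsetSum] at this
      simpa [Algebra.smul_def, mul_comm] using this)
  refine ⟨fun i => ⟨ka i, hka i⟩, ?_⟩
  apply Subtype.ext
  rw [AddSubmonoidClass.coe_finsetSum, hk]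
  simp [Algebra.smul_def, mul_comm]

end HH4

section SplitSec

variable {B L : Type} [CommRing B] [Field L] [Algebra B L]

/-- `c` times the inclusion is a finite sum of rank one maps -/
def SplitElt (R : Subalgebra B L) (c : B) : Prop :=
  ∃ m : ℕ, ∃ f : Fin m → (R →ₗ[B] B), ∃ s : Fin m → L, (∀ j, IsIntegral B (s j)) ∧
      ∀ r : R, algebraMap B L c * (r : L) = ∑ j, algebraMap B L (f j r) * s j

/-- the ideal of splitting elements -/
def splitIdeal (R : Subalgebra B L) : Ideal B where
  carrier := {c | SplitElt R c}
  zero_mem' := ⟨0, Fin.elim0, Fin.elim0, fun j => j.elim0, by simp⟩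
  add_mem' := by
    rintro a b ⟨m, f, s, hs, h⟩ ⟨m', f', s', hs', h'⟩
    refine ⟨m + m', Fin.append f f', Fin.append s s', ?_, fun r => ?_⟩
    · intro j
      refine Fin.addCases (fun i => ?_) (fun i => ?_) j
      · rw [Fin.append_left]; exact hs i
      · rw [Fin.append_right]; exact hs' i
    · rw [Fin.sum_univ_add]
      simp only [Fin.append_left, Fin.append_right]
      rw [← h, ← h', map_add, add_mul]
  smul_mem' := by
    rintro a b ⟨m, f, s, hs, h⟩
    refine ⟨m, fun j => a • f j, s, hs, fun r => ?_⟩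
    simp only [LinearMap.smul_apply, smul_eq_mul, map_mul, mul_assoc, ← Finset.mul_sum]
    rw [← h]

lemma exists_splitElt [IsNoetherianRing B] [IsDomain B] (hinj : Function.Injective (algebraMap B L))
    (R : Subalgebra B L) [Module.Finite B R] (Q : Ideal B) [Q.IsPrime]
    [Module.Flat B (LocalizedModule Q.primeCompl (integralClosure B L))] :
    ∃ c ∉ Q, SplitElt R c := by
  let S := integralClosure B L
  have hle : R ≤ S := fun x hx => (IsIntegral.of_finite B (⟨x, hx⟩ : R)).map R.val
  let φ : R →ₗ[B] S := (Subalgebra.inclusion hle).toLinearMap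
  let ℓ := LocalizedModule.mkLinearMap Q.primeCompl S
  have hfp : Module.FinitePresentation B R := Module.finitePresentation_of_finite B R
  obtain ⟨k, f, g, hfg⟩ := Module.Flat.exists_factorization_of_finitePresentation
    (P := R) (ℓ.comp φ)
  obtain ⟨t, ht⟩ := IsLocalizedModule.exist_integer_multiples_of_finite Q.primeCompl ℓ
    (fun j : Fin k => g (Finsupp.single j 1))
  have hs : ∀ j : Fin k, ∃ s : S, ℓ s = t • g (Finsupp.single j 1) := by
    intro j
    exact ht j
  choose s hs using hs
  refine ⟨t.1, t.2, k, fun j => (Finsupp.lapply j).comp f, fun j => (s j).1, fun j => (s j).2,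
    fun r => ?_⟩
  have h1 : ℓ (t.1 • φ r) = ℓ (∑ j, f r j • s j) := by
    have e1 : ℓ (φ r) = g (f r) := LinearMap.congr_fun hfg r
    rw [map_smul, e1, map_sum]
    simp only [map_smul, hs]
    conv_lhs => rw [← Finsupp.univ_sum_single (f r)]
    rw [map_sum, Finset.smul_sum]
    refine Finset.sum_congr rfl fun j _ => ?_
    have : Finsupp.single j (f r j) = f r j • Finsupp.single j (1 : B) := by simp
    rw [this, map_smul, smul_comm]
    rfl
  obtain ⟨c, hc⟩ := (IsLocalizedModule.eq_iff_exists Q.primeCompl ℓ).1 h1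
  have hc0 : algebraMap B L c.1 ≠ 0 := by
    rw [Ne, map_eq_zero_iff _ hinj]
    intro h
    exact c.2 (h ▸ Q.zero_mem)
  have h2 := congrArg Subtype.val hc
  have h3 : algebraMap B L c.1 * (algebraMap B L t.1 * r.1) =
      algebraMap B L c.1 * ∑ j, algebraMap B L (f r j) * (s j).1 := by
    rw [Submonoid.smul_def, Submonoid.smul_def, SetLike.val_smul, SetLike.val_smul,
      SetLike.val_smul, AddSubmonoidClass.coe_finsetSum, Algebra.smul_def, Algebra.smul_def,
      Algebra.smul_def] at h2
    have e2 : (φ r).1 = r.1 := rfl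
    simpa [Algebra.smul_def, e2] using h2
  exact mul_left_cancel₀ hc0 h3

theorem split_of_flat [IsNoetherianRing B] [IsDomain B] [IsLocalRing B]
    (hinj : Function.Injective (algebraMap B L))
    (hloc : ∀ (Q : Ideal B) [Q.IsPrime], Q ≠ maximalIdeal B →
      Module.Flat B (LocalizedModule Q.primeCompl (integralClosure B L)))
    (c : B) (hc : c ∈ maximalIdeal B) : Split B L c := by
  intro R hR
  have : c ∈ (splitIdeal R).radical := by
    rw [Ideal.radical_eq_sInf, Ideal.mem_sInf]
    rintro Q ⟨hQ, hQp⟩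
    by_contra hcQ
    have hne : Q ≠ maximalIdeal B := fun h => hcQ (h ▸ hc)
    have := hloc Q hne
    obtain ⟨t, ht, ht'⟩ := exists_splitElt hinj R Q
    exact ht (hQ ht')
  obtain ⟨N, hN⟩ := this
  exact ⟨N, hN⟩

end SplitSec

section RegSeq

variable {B : Type} [CommRing B]

/-- ideal generated by `z i`, `i < n` -/
def zsp (z : ℕ → B) (n : ℕ) : Ideal B := Ideal.span (z '' ((Finset.range n : Finset ℕ) : Set ℕ))

lemma zsp_succ (z : ℕ → B) (n : ℕ) : zsp z (n+1) = Ideal.span {z n} ⊔ zsp z n := by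
  unfold zsp
  rw [Finset.range_add_one, Finset.coe_insert, Set.image_insert_eq, Ideal.span_insert]

lemma zsp_zero (z : ℕ → B) : zsp z 0 = ⊥ := by simp [zsp]

lemma zsp_congr {z z' : ℕ → B} {n : ℕ} (h : ∀ i < n, z i = z' i) : zsp z n = zsp z' n := by
  unfold zsp
  congr 1
  exact Set.image_congr fun i hi => h i (by simpa using hi)

/-- weakly regular sequence of ring elements -/
def RReg (z : ℕ → B) (k : ℕ) : Prop := ∀ n < k, ∀ w, z n * w ∈ zsp z n → w ∈ zsp z n

lemma HReg_of_RReg (z : ℕ → B) (k : ℕ) (h : RReg z k) : HReg (fun i (e : ℕ) => z i ^ e) k := by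
  suffices ∀ n ≤ k, HReg (fun i (e : ℕ) => z i ^ e) n from this k le_rfl
  intro n
  induction n with
  | zero => intro _ j hj; omega
  | succ n ih =>
    intro hn j hj
    rcases Nat.lt_succ_iff_lt_or_eq.1 hj with hj' | rfl
    · exact ih (by omega) j hj'
    have ih := ih (by omega)
    set pw : ℕ → ℕ → B := fun i e => z i ^ e with hpw
    have hadd : ∀ i a b, pw i (a + b) = pw i a * pw i b := fun i a b => pow_add _ _ _
    have key : ∀ (S : ℕ) (e : ℕ → ℕ), ∑ i ∈ Finset.range j, e i = S → ∀ w,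
        z j * w ∈ Isp pw (Finset.range j) e → w ∈ Isp pw (Finset.range j) e := by
      intro S
      induction S using Nat.strong_induction_on with
      | _ S IH =>
      intro e hS w hw
      by_cases h0 : ∃ i < j, e i = 0
      · obtain ⟨i, hi, h0⟩ := h0
        have : (1 : B) ∈ Isp pw (Finset.range j) e := by
          have := mem_Isp_of_mem (pw := pw) (e := e) (Finset.mem_range.2 hi)
          simpa [hpw, h0] using this
        rw [(Ideal.eq_top_iff_one _).2 this]
        trivial
      by_cases h2 : ∃ i < j, 2 ≤ e i
      · obtain ⟨i, hi, h2⟩ := h2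
        have hsum : ∀ t, t < e i → ∑ l ∈ Finset.range j, Function.update e i t l < S := by
          intro t ht
          rw [← hS]
          apply Finset.sum_lt_sum
          · intro l _
            rcases eq_or_ne l i with rfl | hl
            · rw [Function.update_self]; exact ht.le
            · rw [Function.update_of_ne hl]
          · exact ⟨i, Finset.mem_range.2 hi, by rwa [Function.update_self]⟩
        obtain ⟨t, ht⟩ : ∃ t, e i = t + 1 := ⟨e i - 1, by omega⟩
        have hup : ∀ t, Isp pw ((Finset.range j).erase i) (Function.update e i t) =
            Isp pw ((Finset.range j).erase i) e := by
          intro t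
          apply Isp_congr
          intro l hl
          rw [Function.update_of_ne (Finset.ne_of_mem_erase hl)]
        have h3 : w ∈ Isp pw (Finset.range j) (Function.update e i t) := by
          apply IH _ (hsum t (by omega)) _ rfl
          obtain ⟨s, v, hv, hs⟩ := (mem_Isp_range hi).1 hw
          rw [mem_Isp_range hi, hup]
          refine ⟨s * z i, v, hv, ?_⟩
          rw [hs, Function.update_self, ht, hadd]
          simp only [hpw, pow_one]; ring
        obtain ⟨s, v, hv, hs⟩ := (mem_Isp_range hi).1 h3
        rw [hup] at hv
        rw [Function.update_self] at hs
        have h4 : z j * s ∈ Isp pw (Finset.range j) (Function.update e i 1) := by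
          apply ih.cancel hadd hi _ t
          rw [Function.update_idem, Function.update_self]
          have e1 : Function.update e i (1 + t) = e := by
            rw [add_comm, ← ht, Function.update_eq_self]
          rw [e1]
          have := sub_mem hw (Ideal.mul_mem_left _ (z j)
            (Isp_mono (Finset.erase_subset i (Finset.range j)) hv))
          convert this using 1
          rw [hs]; ring
        have h5 := IH _ (hsum 1 (by omega)) _ rfl _ h4
        obtain ⟨s', v', hv', hs'⟩ := (mem_Isp_range hi).1 h5
        rw [hup] at hv'
        rw [Function.update_self] at hs'
        rw [mem_Isp_range hi]
        refine ⟨s', v' * pw i t + v, add_mem (Ideal.mul_mem_right _ _ hv') hv, ?_⟩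
        rw [hs, hs', ht, hadd]; ring
      · have h1 : Isp pw (Finset.range j) e = zsp z j := by
          unfold Isp zsp
          congr 1
          apply Set.image_congr
          intro i hi
          have hi' : i < j := by simpa using hi
          have : e i = 1 := by
            push Not at h0 h2
            have := h0 i hi'; have := h2 i hi'; omega
          simp [hpw, this]
        rw [h1] at hw ⊢
        exact h j (by omega) w hw
    intro e b w hw
    induction b generalizing w with
    | zero => simpa [hpw] using hw
    | succ b ihb =>
      apply ihb
      apply key _ _ rfl
      convert hw using 1
      simp only [hpw]; ring

lemma exists_max_reg [IsNoetherianRing B] [IsLocalRing B] :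
    ∃ (z : ℕ → B) (k : ℕ) (u : B), (∀ i < k, z i ∈ maximalIdeal B) ∧ RReg z k ∧
      u ∉ zsp z k ∧ ∀ c ∈ maximalIdeal B, c * u ∈ zsp z k := by
  let 𝓘 : Set (Ideal B) := {I | ∃ (z : ℕ → B) (k : ℕ), (∀ i < k, z i ∈ maximalIdeal B) ∧ RReg z k ∧
    I = zsp z k}
  have hne : 𝓘.Nonempty := ⟨_, fun _ => 0, 0, by simp, fun n hn => by omega, rfl⟩
  obtain ⟨I, ⟨z, k, hzm, hreg, rfl⟩, hmax⟩ := set_has_maximal_iff_noetherian.2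
    (inferInstance : IsNoetherian B B) 𝓘 hne
  by_contra hcon
  push Not at hcon
  have hcon := fun u h => hcon z k u hzm hreg h
  have hIm : zsp z k ≤ maximalIdeal B := by
    unfold zsp
    rw [Ideal.span_le]
    rintro _ ⟨i, hi, rfl⟩
    exact hzm i (by simpa using hi)
  have hx : ∃ x ∈ maximalIdeal B, ∀ w, x * w ∈ zsp z k → w ∈ zsp z k := by
    by_contra hx
    push Not at hx
    have hsub : (maximalIdeal B : Set B) ⊆ ⋃ P ∈ associatedPrimes B (B ⧸ zsp z k), (P : Set B) := by
      rw [biUnion_associatedPrimes_eq_zero_divisors]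
      intro x hxm
      obtain ⟨w, hw, hw'⟩ := hx x hxm
      refine ⟨Ideal.Quotient.mk _ w, ?_, ?_⟩
      · rwa [Ne, Ideal.Quotient.eq_zero_iff_mem]
      · rw [← Ideal.Quotient.eq_zero_iff_mem] at hw
        rw [← hw]; rfl
    obtain ⟨P, hP, hmP⟩ := (Ideal.subset_union_prime_finite
      (associatedPrimes.finite B (B ⧸ zsp z k)) (f := id) ⊥ ⊥
      (fun P hP _ _ => hP.isPrime)).1 hsub
    obtain ⟨hPp, w, hw⟩ := isAssociatedPrime_iff.1 (AssociatedPrimes.mem_iff.1 hP)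
    obtain ⟨u, rfl⟩ := Ideal.Quotient.mk_surjective w
    have hPm : P = maximalIdeal B := le_antisymm (le_maximalIdeal hPp.ne_top) hmP
    have huI : u ∉ zsp z k := by
      intro hu
      rw [← Ideal.Quotient.eq_zero_iff_mem] at hu
      apply hPp.ne_top
      rw [hw, hu]
      ext; simp [Submodule.mem_colon_singleton]
    obtain ⟨c, hc, hcu⟩ := hcon u huI
    apply hcu
    rw [← hPm, hw, Submodule.mem_colon_singleton, Submodule.mem_bot] at hc
    rw [← Ideal.Quotient.eq_zero_iff_mem, ← hc]
    rfl
  obtain ⟨x, hxm, hxr⟩ := hx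
  have hx1 : x ∉ zsp z k := fun h => by
    have := hIm (hxr 1 (by simpa using h))
    exact (Ideal.ne_top_iff_one _).1 (maximalIdeal.isMaximal B).ne_top this
  let z' : ℕ → B := Function.update z k x
  have hz' : ∀ n ≤ k, zsp z' n = zsp z n := fun n hn => zsp_congr fun i hi => by
    simp only [z']; rw [Function.update_of_ne (by omega)]
  refine hmax (zsp z' (k+1)) ⟨z', k+1, ?_, ?_, rfl⟩ ?_
  · intro i hi
    rcases Nat.lt_succ_iff_lt_or_eq.1 hi with hi | rfl
    · simp only [z']; rw [Function.update_of_ne (by omega)]; exact hzm i hi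
    · simpa [z'] using hxm
  · intro n hn w
    rw [hz' n (by omega)]
    rcases Nat.lt_succ_iff_lt_or_eq.1 hn with hn | rfl
    · simp only [z']; rw [Function.update_of_ne (by omega)]; exact hreg n hn w
    · simpa [z'] using hxr w
  · rw [zsp_succ, hz' k le_rfl]
    refine lt_of_le_of_ne le_sup_right fun h => hx1 ?_
    rw [h]
    apply (le_sup_left : Ideal.span {z' k} ≤ _)
    simp [z']

end RegSeq

section FlatLoc

variable {B : Type} [CommRing B]

lemma flat_of_exact {G F N : Type} [AddCommGroup G] [AddCommGroup F] [AddCommGroup N]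
    [Module B G] [Module B F] [Module B N] (f : G →ₗ[B] F) (g : F →ₗ[B] N)
    (hf : Function.Injective f) (hfg : Function.Exact f g) (hg : Function.Surjective g)
    [Module.Flat B F] [Module.Flat B N] : Module.Flat B G := by
  rw [Module.Flat.iff_rTensor_injective']
  intro I
  have h1 : Function.Injective (f.lTensor I) :=
    LinearMap.lTensor_injective_of_exact_of_flat g hg f hf hfg I
  have h2 : Function.Injective (LinearMap.rTensor F I.subtype) :=
    Module.Flat.iff_rTensor_injective'.1 inferInstance I
  have h3 : (f.lTensor B) ∘ₗ (LinearMap.rTensor G I.subtype) =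
      (LinearMap.rTensor F I.subtype) ∘ₗ (f.lTensor I) := by
    rw [LinearMap.lTensor_comp_rTensor, LinearMap.rTensor_comp_lTensor]
  have h4 : Function.Injective ((f.lTensor B) ∘ₗ (LinearMap.rTensor G I.subtype)) := by
    rw [h3]; exact h2.comp h1
  exact Function.Injective.of_comp h4

/-- finite sums description of `I • ⊤`-like submodules -/
lemma mem_smul_iff_sum {M : Type} [AddCommGroup M] [Module B M] (I : Ideal B) (P : Submodule B M)
    (x : M) : x ∈ I • P ↔ ∃ (l : ℕ) (a : Fin l → B) (y : Fin l → M), (∀ i, a i ∈ I) ∧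
      (∀ i, y i ∈ P) ∧ x = ∑ i, a i • y i := by
  constructor
  · intro h
    induction h using Submodule.smul_induction_on' with
    | smul r hr n hn => exact ⟨1, fun _ => r, fun _ => n, fun _ => hr, fun _ => hn, by simp⟩
    | add x _ y _ hx hy =>
      obtain ⟨l, a, y1, ha, hy1, rfl⟩ := hx
      obtain ⟨l', a', y', ha', hy', rfl⟩ := hy
      refine ⟨l + l', Fin.append a a', Fin.append y1 y', ?_, ?_, ?_⟩
      · intro j
        refine Fin.addCases (fun i => ?_) (fun i => ?_) j
        · rw [Fin.append_left]; exact ha i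
        · rw [Fin.append_right]; exact ha' i
      · intro j
        refine Fin.addCases (fun i => ?_) (fun i => ?_) j
        · rw [Fin.append_left]; exact hy1 i
        · rw [Fin.append_right]; exact hy' i
      · rw [Fin.sum_univ_add]
        simp only [Fin.append_left, Fin.append_right]
  · rintro ⟨l, a, y, ha, hy, rfl⟩
    exact sum_mem fun i _ => Submodule.smul_mem_smul (ha i) (hy i)

lemma flat_colon {F : Type} [AddCommGroup F] [Module B F] [Module.Flat B F] (I : Ideal B) (c : B)
    (y : F) (h : c • y ∈ I • (⊤ : Submodule B F)) :
    ∃ (l : ℕ) (b : Fin l → B) (w : Fin l → F), (∀ j, c * b j ∈ I) ∧ y = ∑ j, b j • w j := by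
  obtain ⟨l, a, v, ha, -, hs⟩ := (mem_smul_iff_sum _ _ _).1 h
  have h1 : ∑ i : Fin (l+1), (Fin.cons c (fun i => - a i) : Fin (l+1) → B) i •
      (Fin.cons y v : Fin (l+1) → F) i = 0 := by
    rw [Fin.sum_univ_succ]
    simp [hs]
  obtain ⟨k, b, w, hb, hb'⟩ := Module.Flat.isTrivialRelation_of_sum_smul_eq_zero h1
  refine ⟨k, b 0, w, fun j => ?_, by simpa using hb 0⟩
  have := hb' j
  rw [Fin.sum_univ_succ] at this
  simp only [Fin.cons_zero, Fin.cons_succ] at this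
  rw [eq_neg_of_add_eq_zero_left this]
  exact neg_mem (sum_mem fun i _ => Ideal.mul_mem_right _ _ (neg_mem (ha i)))

lemma mem_smul_top_ker {F N : Type} [AddCommGroup F] [AddCommGroup N] [Module B F] [Module B N]
    (π : F →ₗ[B] N) (I : Ideal B) (g : LinearMap.ker π) :
    g ∈ I • (⊤ : Submodule B (LinearMap.ker π)) ↔ (g : F) ∈ I • LinearMap.ker π := by
  have h1 : (I • (⊤ : Submodule B (LinearMap.ker π))).map (LinearMap.ker π).subtype =
      I • LinearMap.ker π := by
    rw [Submodule.map_smul'', Submodule.map_subtype_top]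
  rw [← h1]
  constructor
  · intro h; exact ⟨g, h, rfl⟩
  · rintro ⟨g', h, he⟩
    have : g' = g := Subtype.ext he
    rwa [← this]

/-- flatness of a quotient from purity -/
lemma flat_of_pure {F N : Type} [AddCommGroup F] [AddCommGroup N] [Module B F] [Module B N]
    [Module.Flat B F] (π : F →ₗ[B] N) (hπ : Function.Surjective π)
    (h : ∀ (I : Ideal B) (g : F), π g = 0 → g ∈ I • (⊤ : Submodule B F) → g ∈ I • LinearMap.ker π) :
    Module.Flat B N := by
  apply Module.Flat.of_forall_isTrivialRelation
  intro l a n hn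
  choose y hy using fun i => hπ (n i)
  have h1 := h (Ideal.span (Set.range a)) (∑ i, a i • y i) (by simp [hy, hn])
    (sum_mem fun i _ => Submodule.smul_mem_smul (Ideal.subset_span ⟨i, rfl⟩) trivial)
  have h2 : ∃ g : Fin l → F, (∀ i, π (g i) = 0) ∧ ∑ i, a i • y i = ∑ i, a i • g i := by
    generalize ∑ i, a i • y i = x at h1
    induction h1 using Submodule.smul_induction_on' with
    | smul r hr m hm =>
      obtain ⟨c, rfl⟩ := (Submodule.mem_span_range_iff_exists_fun B).1 hr
      refine ⟨fun i => c i • m, fun i => by rw [map_smul, LinearMap.mem_ker.1 hm, smul_zero], ?_⟩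
      rw [Finset.sum_smul]
      refine Finset.sum_congr rfl fun i _ => ?_
      rw [smul_eq_mul, mul_comm, mul_smul]
    | add x _ y _ hx hy =>
      obtain ⟨g, hg, rfl⟩ := hx
      obtain ⟨g', hg', rfl⟩ := hy
      exact ⟨g + g', fun i => by simp [hg, hg'], by simp [Finset.sum_add_distrib]⟩
  obtain ⟨g, hg, hs⟩ := h2
  have h3 : ∑ i, a i • (y i - g i) = 0 := by simp [smul_sub, Finset.sum_sub_distrib, hs]
  obtain ⟨k, b, w, hb, hb'⟩ := Module.Flat.isTrivialRelation_of_sum_smul_eq_zero h3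
  refine ⟨k, b, fun j => π (w j), fun i => ?_, hb'⟩
  have := congrArg π (hb i)
  rw [map_sub, hg, sub_zero, hy] at this
  rw [this]
  simp

/-- purity up to an element outside `Q` -/
lemma pure_of_flat_loc {F N : Type} [AddCommGroup F] [AddCommGroup N] [Module B F] [Module B N]
    (π : F →ₗ[B] N) (hπ : Function.Surjective π) (S : Submonoid B)
    [Module.Flat B (LocalizedModule S N)]
    (I : Ideal B) (g : F) (hg : π g = 0) (hgI : g ∈ I • (⊤ : Submodule B F)) :
    ∃ c ∈ S, c • g ∈ I • LinearMap.ker π := by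
  let ℓ := LocalizedModule.mkLinearMap S N
  obtain ⟨l, a, y, ha, -, rfl⟩ := (mem_smul_iff_sum _ _ _).1 hgI
  have h1 : ∑ i, a i • ℓ (π (y i)) = 0 := by
    have := congrArg ℓ hg
    simpa using this
  obtain ⟨k, b, ν, hb, hb'⟩ := Module.Flat.isTrivialRelation_of_sum_smul_eq_zero h1
  have hb : ∀ i, ℓ (π (y i)) = ∑ j, b i j • ν j := hb
  obtain ⟨t, ht⟩ := IsLocalizedModule.exist_integer_multiples_of_finite S ℓ ν
  choose n hn using ht
  choose w hw using fun j => hπ (n j)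
  have h2 : ∀ i, ∃ c : S, c • (t • π (y i)) = c • ∑ j, b i j • n j := by
    intro i
    apply (IsLocalizedModule.eq_iff_exists S ℓ).1
    rw [Submonoid.smul_def, map_smul, hb i, map_sum, Finset.smul_sum]
    refine Finset.sum_congr rfl fun j _ => ?_
    rw [map_smul, hn j, smul_comm]
  choose c hc using h2
  refine ⟨(∏ i, (c i : B)) * t, mul_mem (prod_mem fun i _ => (c i).2) t.2, ?_⟩
  have h3 : ∀ i, (∏ i, (c i : B)) • ((t : B) • y i - ∑ j, b i j • w j) ∈ LinearMap.ker π := by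
    intro i
    rw [LinearMap.mem_ker, map_smul, map_sub, map_smul, map_sum]
    simp only [map_smul, hw]
    have := hc i
    rw [Submonoid.smul_def, Submonoid.smul_def, Submonoid.smul_def] at this
    rw [← Finset.prod_erase_mul _ _ (Finset.mem_univ i), mul_smul, smul_sub (c i : B), this,
      sub_self, smul_zero]
  have h4 : ((∏ i, (c i : B)) * t) • ∑ i, a i • y i =
      ∑ i, a i • ((∏ i, (c i : B)) • ((t : B) • y i - ∑ j, b i j • w j)) := by
    have h5 : ∑ i, a i • ∑ j, b i j • w j = 0 := by
      simp only [Finset.smul_sum, smul_smul]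
      rw [Finset.sum_comm]
      simp only [← Finset.sum_smul, hb', zero_smul, Finset.sum_const_zero]
    have h6 : ∑ i, a i • ((∏ i, (c i : B)) • ((t : B) • y i - ∑ j, b i j • w j)) =
        (∏ i, (c i : B)) • ((t : B) • ∑ i, a i • y i - ∑ i, a i • ∑ j, b i j • w j) := by
      rw [Finset.smul_sum, ← Finset.sum_sub_distrib, Finset.smul_sum]
      refine Finset.sum_congr rfl fun i _ => ?_
      rw [smul_comm (a i), smul_sub (a i), smul_comm (a i) (t : B)]
    rw [h6, h5, sub_zero, mul_smul]
  rw [h4]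
  exact sum_mem fun i _ => Submodule.smul_mem_smul (ha i) (h3 i)

end FlatLoc

section LocFlat

variable {B : Type} [CommRing B]

/-- flat dimension at most `D` -/
def fdLE (B : Type) [CommRing B] : ℕ → ∀ (M : Type) [AddCommGroup M] [Module B M], Prop
  | 0, M, _, _ => Module.Flat B M
  | D + 1, M, _, _ => ∃ (F G : Type) (_ : AddCommGroup F) (_ : Module B F) (_ : AddCommGroup G)
      (_ : Module B G) (f : G →ₗ[B] F) (g : F →ₗ[B] M), Module.Flat B F ∧ Function.Injective f ∧
      Function.Exact f g ∧ Function.Surjective g ∧ fdLE B D G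

lemma fdLE_equiv : ∀ (D : ℕ) {M N : Type} [AddCommGroup M] [AddCommGroup N] [Module B M]
    [Module B N] (e : M ≃ₗ[B] N), fdLE B D M → fdLE B D N
  | 0, M, N, _, _, _, _, e, h => by
    have : Module.Flat B M := h
    exact Module.Flat.of_linearEquiv e.symm
  | D + 1, M, N, _, _, _, _, e, h => by
    obtain ⟨F, G, _, _, _, _, f, g, hF, hf, hfg, hg, hG⟩ := h
    refine ⟨F, G, inferInstance, inferInstance, inferInstance, inferInstance, f, e.toLinearMap ∘ₗ g,
      hF, hf, ?_, e.surjective.comp hg, hG⟩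
    intro x
    rw [← hfg x]
    simp

def ModReg (z : ℕ → B) (k : ℕ) (N : Type) [AddCommGroup N] [Module B N] : Prop :=
  ∀ n < k, ∀ u : N, z n • u ∈ zsp z n • (⊤ : Submodule B N) → u ∈ zsp z n • (⊤ : Submodule B N)

lemma mem_zsp_succ_smul (z : ℕ → B) (n : ℕ) {N : Type} [AddCommGroup N] [Module B N]
    (P : Submodule B N) (g : N) :
    g ∈ zsp z (n+1) • P ↔ ∃ f ∈ P, ∃ h ∈ zsp z n • P, z n • f + h = g := by
  rw [zsp_succ, Submodule.sup_smul, Submodule.mem_sup]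
  constructor
  · rintro ⟨y, hy, h, hh, rfl⟩
    rw [Submodule.ideal_span_singleton_smul] at hy
    obtain ⟨f, hf, rfl⟩ := hy
    exact ⟨f, hf, h, hh, rfl⟩
  · rintro ⟨f, hf, h, hh, rfl⟩
    exact ⟨z n • f, Submodule.smul_mem_smul (Ideal.mem_span_singleton_self _) hf, h, hh, rfl⟩

lemma exists_lift_smul {F N : Type} [AddCommGroup F] [AddCommGroup N] [Module B F] [Module B N]
    (π : F →ₗ[B] N) (hπ : Function.Surjective π) (I : Ideal B) (x : N)
    (hx : x ∈ I • (⊤ : Submodule B N)) : ∃ y ∈ I • (⊤ : Submodule B F), π y = x := by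
  have : (I • (⊤ : Submodule B F)).map π = I • (⊤ : Submodule B N) := by
    rw [Submodule.map_smul'', Submodule.map_top, LinearMap.range_eq_top.2 hπ]
  rw [← this] at hx
  exact hx

lemma map_smul_top_mem {F N : Type} [AddCommGroup F] [AddCommGroup N] [Module B F] [Module B N]
    (π : F →ₗ[B] N) (I : Ideal B) (x : F)
    (hx : x ∈ I • (⊤ : Submodule B F)) : π x ∈ I • (⊤ : Submodule B N) := by
  have h : (I • (⊤ : Submodule B F)).map π ≤ I • (⊤ : Submodule B N) := by
    rw [Submodule.map_smul'']
    exact Submodule.smul_mono le_rfl le_top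
  exact h ⟨x, hx, rfl⟩

lemma pure_zsp {F N : Type} [AddCommGroup F] [AddCommGroup N] [Module B F] [Module B N]
    (π : F →ₗ[B] N) (hπ : Function.Surjective π) (z : ℕ → B) (k : ℕ) (hN : ModReg z k N) :
    ∀ n ≤ k, ∀ g : F, π g = 0 → g ∈ zsp z n • (⊤ : Submodule B F) →
      g ∈ zsp z n • LinearMap.ker π := by
  intro n
  induction n with
  | zero =>
    intro _ g _ h
    rw [zsp_zero, Submodule.bot_smul] at h ⊢
    exact h
  | succ n ih =>
    intro hn g hg hgz
    obtain ⟨f, -, h, hh, rfl⟩ := (mem_zsp_succ_smul _ _ _ _).1 hgz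
    have h1 : z n • π f ∈ zsp z n • (⊤ : Submodule B N) := by
      have : z n • π f = - π h := by
        rw [map_add, map_smul] at hg
        exact eq_neg_of_add_eq_zero_left hg
      rw [this]
      exact neg_mem (map_smul_top_mem π _ _ hh)
    obtain ⟨h', hh', e⟩ := exists_lift_smul π hπ _ _ (hN n (by omega) _ h1)
    refine (mem_zsp_succ_smul _ _ _ _).2 ⟨f - h', by simp [e], z n • h' + h, ?_, ?_⟩
    · apply ih (by omega)
      · rw [map_add, map_smul, e, ← map_smul, ← map_add, hg]
      · exact add_mem (Submodule.smul_mem _ _ hh') hh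
    · rw [smul_sub]; abel

lemma modReg_flat {F : Type} [AddCommGroup F] [Module B F] [Module.Flat B F] (z : ℕ → B) (k : ℕ)
    (hz : RReg z k) : ModReg z k F := by
  intro n hn u hu
  obtain ⟨l, b, w, hb, rfl⟩ := flat_colon _ _ _ hu
  exact sum_mem fun j _ => Submodule.smul_mem_smul (hz n hn _ (hb j)) trivial

lemma modReg_ker {F N : Type} [AddCommGroup F] [AddCommGroup N] [Module B F] [Module B N]
    [Module.Flat B F] (π : F →ₗ[B] N) (hπ : Function.Surjective π) (z : ℕ → B) (k : ℕ)
    (hz : RReg z k) (hN : ModReg z k N) : ModReg z k (LinearMap.ker π) := by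
  intro n hn u hu
  rw [mem_smul_top_ker] at hu ⊢
  apply pure_zsp π hπ z k hN n hn.le _ u.2
  exact modReg_flat z k hz n hn _ ((Submodule.smul_mono le_rfl le_top) hu)

lemma flat_localizedModule {F : Type} [AddCommGroup F] [Module B F] [Module.Flat B F]
    (S : Submonoid B) : Module.Flat B (LocalizedModule S F) := by
  have : Module.Flat B (Localization S) := IsLocalization.flat _ S
  exact Module.Flat.trans B (Localization S) _

lemma flat_loc_of_exact {G F N : Type} [AddCommGroup G] [AddCommGroup F] [AddCommGroup N]
    [Module B G] [Module B F] [Module B N] (f : G →ₗ[B] F) (g : F →ₗ[B] N)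
    (hf : Function.Injective f) (hfg : Function.Exact f g) (hg : Function.Surjective g)
    [Module.Flat B F] (S : Submonoid B) [Module.Flat B (LocalizedModule S N)] :
    Module.Flat B (LocalizedModule S G) := by
  have := flat_localizedModule (F := F) S
  refine flat_of_exact ((LocalizedModule.map S f).restrictScalars B)
    ((LocalizedModule.map S g).restrictScalars B) ?_ ?_ ?_
  · exact LocalizedModule.map_injective S f hf
  · exact LocalizedModule.map_exact S f g hfg
  · exact LocalizedModule.map_surjective S g hg

theorem flat_of_fd [IsNoetherianRing B] [IsLocalRing B] (z : ℕ → B) (k : ℕ) (u : B)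
    (hz : RReg z k) (hu : u ∉ zsp z k) (hmu : ∀ c ∈ maximalIdeal B, c * u ∈ zsp z k) :
    ∀ (D : ℕ) (N : Type) [AddCommGroup N] [Module B N], fdLE B D N →
      (∀ (Q : Ideal B) [Q.IsPrime], Q ≠ maximalIdeal B →
        Module.Flat B (LocalizedModule Q.primeCompl N)) → ModReg z k N → Module.Flat B N := by
  intro D
  induction D with
  | zero => intro N _ _ h _ _; exact h
  | succ D ih =>
    intro N _ _ h hloc hN
    obtain ⟨F, G, _, _, _, _, f, π, hF, hf, hfg, hπ, hG⟩ := h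
    have e : G ≃ₗ[B] LinearMap.ker π :=
      (LinearEquiv.ofInjective f hf).trans (LinearEquiv.ofEq _ _ hfg.linearMap_ker_eq.symm)
    have hK : Module.Flat B (LinearMap.ker π) := by
      apply ih _ (fdLE_equiv D e hG)
      · intro Q _ hQ
        have := hloc Q hQ
        exact flat_loc_of_exact (LinearMap.ker π).subtype π (Submodule.subtype_injective _)
          (LinearMap.exact_subtype_ker_map π) hπ _
      · exact modReg_ker π hπ z k hz hN
    -- removal of a coefficient
    have key : ∀ (I : Ideal B) (c : B) (g : F), π g = 0 → c • g ∈ I • LinearMap.ker π →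
        ∃ (l : ℕ) (b : Fin l → B) (w : Fin l → F), (∀ j, c * b j ∈ I) ∧ (∀ j, π (w j) = 0) ∧
          g = ∑ j, b j • w j := by
      intro I c g hg h
      have h1 := (mem_smul_top_ker π I (c • (⟨g, hg⟩ : LinearMap.ker π))).2 h
      obtain ⟨l, b, w, hb, hw⟩ := flat_colon _ _ _ h1
      refine ⟨l, b, fun j => w j, hb, fun j => (w j).2, ?_⟩
      have := congrArg (Subtype.val) hw
      simpa using this
    refine flat_of_pure π hπ fun I => ?_
    refine IsNoetherian.induction (R := B) (M := B) (P := fun I : Ideal B => ∀ (g : F), π g = 0 →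
      g ∈ I • (⊤ : Submodule B F) → g ∈ I • LinearMap.ker π) ?_ I
    clear I
    intro (I : Ideal B) ihI
    intro g hg hgI
    by_cases hp : I.IsPrime
    · by_cases hm : I = maximalIdeal B
      · subst hm
        have h1 : u • g ∈ zsp z k • (⊤ : Submodule B F) := by
          obtain ⟨l, a, y, ha, -, rfl⟩ := (mem_smul_iff_sum _ _ _).1 hgI
          rw [Finset.smul_sum]
          refine sum_mem fun i _ => ?_
          rw [smul_smul, mul_comm]
          exact Submodule.smul_mem_smul (hmu _ (ha i)) trivial
        have h2 := pure_zsp π hπ z k hN k le_rfl (u • g) (by simp [hg]) h1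
        obtain ⟨l, b, w, hb, hw, rfl⟩ := key _ _ _ hg h2
        refine sum_mem fun j _ => Submodule.smul_mem_smul ?_ (hw j)
        rw [IsLocalRing.mem_maximalIdeal, mem_nonunits_iff]
        intro hun
        exact hu ((Ideal.unit_mul_mem_iff_mem _ hun).1 (by rw [mul_comm]; exact hb j))
      · have := hloc I hm
        obtain ⟨c, hc, h2⟩ := pure_of_flat_loc π hπ I.primeCompl I g hg hgI
        obtain ⟨l, b, w, hb, hw, rfl⟩ := key _ _ _ hg h2
        refine sum_mem fun j _ => Submodule.smul_mem_smul ?_ (hw j)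
        exact (hp.mem_or_mem (hb j)).resolve_left hc
    · by_cases ht : I = ⊤
      · subst ht
        rw [Submodule.top_smul]; exact hg
      · rw [Ideal.isPrime_iff] at hp
        push Not at hp
        obtain ⟨x, y, hxy, hx, hy⟩ := hp ht
        have h1 : I < I ⊔ Ideal.span {x} := by
          rw [left_lt_sup, Ideal.span_singleton_le_iff_mem]; exact hx
        have h2 := ihI _ h1 g hg ((Submodule.smul_mono_left h1.le) hgI)
        rw [Submodule.sup_smul, Submodule.mem_sup] at h2
        obtain ⟨g1, hg1, g2, hg2, rfl⟩ := h2
        rw [Submodule.ideal_span_singleton_smul] at hg2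
        obtain ⟨g3, hg3, rfl⟩ := hg2
        refine add_mem hg1 ?_
        change x • g3 ∈ _
        have hg3' : π g3 = 0 := hg3
        have h3 : x • g3 ∈ I • (⊤ : Submodule B F) := by
          have := sub_mem hgI ((Submodule.smul_mono (le_refl I) le_top) hg1)
          simpa using this
        obtain ⟨l, b, w, hb, rfl⟩ := flat_colon _ _ _ h3
        let J : Ideal B := I.colon (Ideal.span {x})
        have hJ : ∀ c, c ∈ J ↔ c * x ∈ I := fun c => by
          simp [J, Submodule.mem_colon_singleton, Ideal.mem_colon_span_singleton]
        have h4 : I < J := by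
          refine lt_of_le_of_ne (fun c hc => (hJ c).2 (Ideal.mul_mem_right _ _ hc)) ?_
          intro h
          exact hy (by rw [h]; exact (hJ y).2 (by rwa [mul_comm]))
        have h5 := ihI J h4 _ hg3' (sum_mem fun j _ => Submodule.smul_mem_smul
          ((hJ _).2 (by rw [mul_comm]; exact hb j)) trivial)
        obtain ⟨l', a, v, ha, hv, e⟩ := (mem_smul_iff_sum _ _ _).1 h5
        rw [e, Finset.smul_sum]
        refine sum_mem fun i _ => ?_
        rw [smul_smul, mul_comm]
        exact Submodule.smul_mem_smul ((hJ _).1 (ha i)) (hv i)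

end LocFlat

section Glob

lemma mem_zsp_smul_top {B : Type} [CommRing B] {N : Type} [AddCommGroup N] [Module B N]
    (z : ℕ → B) (n : ℕ) (x : N) :
    x ∈ zsp z n • (⊤ : Submodule B N) ↔ ∃ co : ℕ → N, x = ∑ i ∈ Finset.range n, z i • co i := by
  induction n generalizing x with
  | zero => simp [zsp_zero]
  | succ n ih =>
    rw [mem_zsp_succ_smul]
    constructor
    · rintro ⟨f, -, h, hh, rfl⟩
      obtain ⟨co, rfl⟩ := (ih h).1 hh
      refine ⟨fun i => if i = n then f else co i, ?_⟩
      rw [Finset.sum_range_succ, add_comm]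
      simp only [if_true]
      congr 1
      refine Finset.sum_congr rfl fun i hi => ?_
      rw [if_neg (Finset.mem_range.1 hi).ne]
    · rintro ⟨co, rfl⟩
      exact ⟨co n, trivial, _, (ih _).2 ⟨co, rfl⟩, by rw [Finset.sum_range_succ, add_comm]⟩

theorem local_flat {B L : Type} [CommRing B] [Field L] [Algebra B L] [IsNoetherianRing B]
    [IsDomain B] [IsLocalRing B] [IsAlgClosed L] (p : ℕ) [Fact p.Prime] [CharP L p]
    (hinj : Function.Injective (algebraMap B L))
    (hloc : ∀ (Q : Ideal B) [Q.IsPrime], Q ≠ maximalIdeal B →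
      Module.Flat B (LocalizedModule Q.primeCompl (integralClosure B L)))
    (D : ℕ) (hD : fdLE B D (integralClosure B L)) : Module.Flat B (integralClosure B L) := by
  obtain ⟨z, k, u, hzm, hz, hu, hmu⟩ := exists_max_reg (B := B)
  have hz0 : ∀ i < k, z i ≠ 0 := by
    intro i hi h0
    have h1 := hz i hi 1 (by simp [h0])
    have h2 : zsp z i ≤ maximalIdeal B := by
      rw [zsp, Ideal.span_le]
      rintro _ ⟨j, hj, rfl⟩
      exact hzm j ((Finset.mem_range.1 (by simpa using hj)).trans hi)
    exact (maximalIdeal.isMaximal B).ne_top ((Ideal.eq_top_iff_one _).2 (h2 h1))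
  refine flat_of_fd z k u hz hu hmu D _ hD hloc ?_
  intro n hn v hv
  rw [mem_zsp_smul_top] at hv ⊢
  obtain ⟨co, h⟩ := hv
  exact HH_S p (HReg_of_RReg z k hz) hinj
    (fun i hi => split_of_flat hinj hloc _ (hzm i hi)) hz0 n hn v co h

lemma fdLE_loc {A : Type} [CommRing A] (S : Submonoid A) : ∀ (D : ℕ) (M : Type) [AddCommGroup M]
    [Module A M], fdLE A D M → fdLE (Localization S) D (LocalizedModule S M)
  | 0, M, _, _, h => by
    have : Module.Flat A M := h
    exact (inferInstance : Module.Flat (Localization S) (LocalizedModule S M))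
  | D + 1, M, _, _, h => by
    obtain ⟨F, G, _, _, _, _, f, g, hF, hf, hfg, hg, hG⟩ := h
    exact ⟨LocalizedModule S F, LocalizedModule S G, inferInstance, inferInstance, inferInstance,
      inferInstance, LocalizedModule.map S f, LocalizedModule.map S g, inferInstance,
      LocalizedModule.map_injective S f hf, LocalizedModule.map_exact S f g hfg,
      LocalizedModule.map_surjective S g hg, fdLE_loc S D G hG⟩

/-- localizing twice -/
lemma isLocalizedModule_twice {A B M N K : Type} [CommRing A] [CommRing B] [Algebra A B]
    (S : Submonoid A) [IsLocalization S B] [AddCommGroup M] [AddCommGroup N] [AddCommGroup K]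
    [Module A M] [Module A N] [Module B N] [IsScalarTower A B N] [Module A K] [Module B K]
    [IsScalarTower A B K]
    (f : M →ₗ[A] N) [IsLocalizedModule S f] (Q : Ideal B) [Q.IsPrime] (g : N →ₗ[B] K)
    [IsLocalizedModule Q.primeCompl g] :
    IsLocalizedModule (Q.comap (algebraMap A B)).primeCompl ((g.restrictScalars A) ∘ₗ f) where
  map_units s := by
    have h := IsLocalizedModule.map_units g (⟨algebraMap A B s, s.2⟩ : Q.primeCompl)
    rw [Module.End.isUnit_iff] at h ⊢
    convert h using 1
    ext x
    simp [Module.algebraMap_end_apply]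
  surj y := by
    obtain ⟨⟨t, b⟩, hb⟩ := IsLocalizedModule.surj Q.primeCompl g y
    obtain ⟨⟨a, s⟩, ha⟩ := IsLocalizedModule.surj S f t
    obtain ⟨⟨b0, s1⟩, hb0⟩ := IsLocalization.surj S (b : B)
    have hsQ : ∀ s : S, algebraMap A B s ∉ Q := fun s h =>
      Ideal.IsPrime.ne_top inferInstance (Ideal.eq_top_of_isUnit_mem _ h (IsLocalization.map_units B s))
    have hb0Q : algebraMap A B b0 ∉ Q := by
      rw [← hb0]
      intro h
      rcases Ideal.IsPrime.mem_or_mem inferInstance h with h | h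
      · exact b.2 h
      · exact hsQ s1 h
    refine ⟨⟨(s1 : A) • a, ⟨(s : A) * b0, ?_⟩⟩, ?_⟩
    · intro h
      replace h : algebraMap A B ((s : A) * b0) ∈ Q := h
      rw [map_mul] at h
      rcases Ideal.IsPrime.mem_or_mem inferInstance h with h | h
      · exact hsQ s h
      · exact hb0Q h
    · simp only [Submonoid.smul_def, LinearMap.comp_apply, map_smul, LinearMap.restrictScalars_apply]
      simp only [Submonoid.smul_def] at ha hb
      rw [← ha, ← algebraMap_smul B ((s : A) * b0) y, map_mul, ← hb0]
      have : g ((s : A) • t) = (s : A) • g t := map_smul (g.restrictScalars A) _ _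
      rw [this, ← hb, ← algebraMap_smul B (s1 : A), ← algebraMap_smul B (s : A), smul_smul, smul_smul]
      congr 1
      ring
  exists_of_eq {x y} h := by
    obtain ⟨b, hb⟩ := IsLocalizedModule.exists_of_eq (S := Q.primeCompl) (f := g) h
    obtain ⟨⟨b0, s1⟩, hb0⟩ := IsLocalization.surj S (b : B)
    have hsQ : ∀ s : S, algebraMap A B s ∉ Q := fun s h =>
      Ideal.IsPrime.ne_top inferInstance (Ideal.eq_top_of_isUnit_mem _ h (IsLocalization.map_units B s))
    have hb0Q : algebraMap A B b0 ∉ Q := by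
      rw [← hb0]
      intro h
      rcases Ideal.IsPrime.mem_or_mem inferInstance h with h | h
      · exact b.2 h
      · exact hsQ s1 h
    have h2 : f (b0 • x) = f (b0 • y) := by
      rw [map_smul, map_smul, ← algebraMap_smul B b0, ← algebraMap_smul B b0, ← hb0, mul_comm,
        mul_smul, mul_smul]
      congr 1
    obtain ⟨s, hs⟩ := IsLocalizedModule.exists_of_eq (S := S) (f := f) h2
    refine ⟨⟨(s : A) * b0, ?_⟩, ?_⟩
    · intro h
      replace h : algebraMap A B ((s : A) * b0) ∈ Q := h
      rw [map_mul] at h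
      rcases Ideal.IsPrime.mem_or_mem inferInstance h with h | h
      · exact hsQ s h
      · exact hb0Q h
    · simp only [Submonoid.smul_def] at hs ⊢
      rw [mul_smul, mul_smul]; exact hs

/-- the inclusion of integral closures -/
noncomputable def icMap (A B L : Type) [CommRing A] [CommRing B] [Field L] [Algebra A B]
    [Algebra A L] [Algebra B L] [IsScalarTower A B L] :
    integralClosure A L →ₗ[A] integralClosure B L where
  toFun x := ⟨x.1, IsIntegral.tower_top x.2⟩
  map_add' _ _ := rfl
  map_smul' _ _ := rfl

lemma icMap_loc (A B L : Type) [CommRing A] [CommRing B] [Field L] [Algebra A B]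
    [Algebra A L] [Algebra B L] [IsScalarTower A B L] (S : Submonoid A) [IsLocalization S B] :
    IsLocalizedModule S (icMap A B L) where
  map_units s := by
    rw [Module.End.isUnit_iff]
    obtain ⟨u, hu⟩ := IsLocalization.map_units B s
    have h1 : ∀ (s : S) (x : integralClosure B L), (algebraMap A (Module.End A (integralClosure B L))) s x
       = algebraMap A B s • x := fun s x => by
      rw [Module.algebraMap_end_apply, algebraMap_smul]
    constructor
    · intro x y h
      rw [h1, h1, ← hu] at h
      exact smul_left_cancel u h
    · intro y
      refine ⟨u⁻¹ • y, ?_⟩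
      rw [h1, ← hu]
      exact smul_inv_smul u y
  surj y := by
    obtain ⟨m, hm⟩ := IsIntegral.exists_multiple_integral_of_isLocalization S (y : L) y.2
    refine ⟨⟨⟨_, hm⟩, m⟩, ?_⟩
    rfl
  exists_of_eq {x y} h := ⟨1, by
    have : x.1 = y.1 := congrArg (fun t : integralClosure B L => t.1) h
    rw [Subtype.ext this]⟩

theorem global_flat {A L : Type} [CommRing A] [IsDomain A] [IsNoetherianRing A] [Field L]
    [Algebra A L] [IsAlgClosed L] (p : ℕ) [Fact p.Prime] [CharP L p]
    (hinj : Function.Injective (algebraMap A L))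
    (D : ℕ) (hD : fdLE A D (integralClosure A L)) : Module.Flat A (integralClosure A L) := by
  have key : ∀ (h : ℕ∞) (P : Ideal A) [P.IsPrime], P.height = h →
      Module.Flat A (LocalizedModule P.primeCompl (integralClosure A L)) := by
    intro h
    induction h using WellFoundedLT.induction with
    | ind h ih =>
    intro P _ hP
    have hu : ∀ y : P.primeCompl, IsUnit (algebraMap A L y) := by
      intro y
      rw [isUnit_iff_ne_zero]
      intro h0
      have : (y : A) = 0 := hinj (by rw [h0, map_zero])
      exact y.2 (by rw [this]; exact P.zero_mem)
    let φ : Localization.AtPrime P →+* L := IsLocalization.lift hu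
    let _ : Algebra (Localization.AtPrime P) L := φ.toAlgebra
    have : IsScalarTower A (Localization.AtPrime P) L :=
      IsScalarTower.of_algebraMap_eq fun a => (IsLocalization.lift_eq hu a).symm
    have := icMap_loc A (Localization.AtPrime P) L P.primeCompl
    have hinj' : Function.Injective (algebraMap (Localization.AtPrime P) L) := by
      refine (IsLocalization.lift_injective_iff hu).2 fun x y => ?_
      have h1 : Function.Injective (algebraMap A (Localization.AtPrime P)) :=
        IsLocalization.injective _ P.primeCompl_le_nonZeroDivisors
      exact ⟨fun h => by rw [h1 h], fun h => by rw [hinj h]⟩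
    have : IsDomain (Localization.AtPrime P) := hinj'.isDomain
    let e : LocalizedModule P.primeCompl (integralClosure A L) ≃ₗ[A]
        integralClosure (Localization.AtPrime P) L :=
      IsLocalizedModule.iso P.primeCompl (icMap A (Localization.AtPrime P) L)
    let e' := LinearEquiv.extendScalarsOfIsLocalization P.primeCompl (Localization.AtPrime P) e
    have hfl : Module.Flat (Localization.AtPrime P) (integralClosure (Localization.AtPrime P) L) := by
      refine local_flat p hinj' ?_ D (fdLE_equiv D e' (fdLE_loc _ D _ hD))
      intro Q _ hQ
      rw [Module.flat_iff_of_isLocalization (R := A) (Localization.AtPrime P) P.primeCompl]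
      have h1 := isLocalizedModule_twice (K := LocalizedModule Q.primeCompl (integralClosure (Localization.AtPrime P) L)) P.primeCompl (icMap A (Localization.AtPrime P) L) Q
        (LocalizedModule.mkLinearMap Q.primeCompl (integralClosure (Localization.AtPrime P) L))
      have hlt : Q.comap (algebraMap A (Localization.AtPrime P)) < P := by
        have h2 : Q < maximalIdeal _ := lt_of_le_of_ne (IsLocalRing.le_maximalIdeal
          (Ideal.IsPrime.ne_top inferInstance)) hQ
        have h4 : (maximalIdeal (Localization.AtPrime P)).comap
            (algebraMap A (Localization.AtPrime P)) = P :=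
          IsLocalization.AtPrime.under_maximalIdeal (Localization.AtPrime P) P
        refine lt_of_lt_of_eq ?_ h4
        refine lt_of_le_of_ne (Ideal.comap_mono h2.le) fun h => hQ ?_
        have h5 := congrArg (Ideal.map (algebraMap A (Localization.AtPrime P))) h
        have h6 := IsLocalization.map_under P.primeCompl (Localization.AtPrime P) Q
        have h7 := IsLocalization.map_under P.primeCompl (Localization.AtPrime P)
          (maximalIdeal (Localization.AtPrime P))
        exact h6.symm.trans (h5.trans h7)
      have h3 := ih _ (hP ▸ Ideal.height_strict_mono_of_isPrime_of_isPrime hlt) (Q.comap (algebraMap A (Localization.AtPrime P))) rfl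
      exact Module.Flat.of_linearEquiv (@IsLocalizedModule.iso _ _ _ _ _ _ _ _ _ _ h1).symm
    rw [Module.flat_iff_of_isLocalization (R := A) (Localization.AtPrime P) P.primeCompl] at hfl
    exact Module.Flat.of_linearEquiv e
  apply Module.flat_of_localized_maximal
  intro P hP
  exact key _ P rfl

end Glob

section FinFd

variable {A : Type} [CommRing A]

/-- vanishing of Tor_1 -/
def T1 (A : Type) [CommRing A] (M N : Type) [AddCommGroup M] [AddCommGroup N] [Module A M]
    [Module A N] : Prop :=
  ∀ (G F : Type) [AddCommGroup G] [AddCommGroup F] [Module A G] [Module A F]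
    (f : G →ₗ[A] F) (g : F →ₗ[A] N), Module.Flat A F → Function.Injective f →
      Function.Exact f g → Function.Surjective g → Function.Injective (f.lTensor M)

/-- `Tor_1(M,N) = 0` for `fd M ≤ j` -/
def QT (A : Type) [CommRing A] (j : ℕ) (N : Type) [AddCommGroup N] [Module A N] : Prop :=
  ∀ (M : Type) [AddCommGroup M] [Module A M], fdLE A j M → T1 A M N

lemma QT_zero (N : Type) [AddCommGroup N] [Module A N] : QT A 0 N := by
  intro M _ _ hM G F _ _ _ _ f g _ hf _ _
  have : Module.Flat A M := hM
  exact Module.Flat.lTensor_preserves_injective_linearMap f hf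

lemma QT_succ {j : ℕ} {N' F N : Type} [AddCommGroup N] [Module A N] [AddCommGroup F] [Module A F]
    [AddCommGroup N'] [Module A N'] (h : QT A j N) (f : N' →ₗ[A] F) (g : F →ₗ[A] N)
    (hF : Module.Flat A F) (hf : Function.Injective f) (hfg : Function.Exact f g)
    (hg : Function.Surjective g) : QT A (j+1) N' := by
  intro M _ _ hM G F' _ _ _ _ f' g' hF' hf' hfg' hg'
  obtain ⟨P, K, _, _, _, _, a, b, hP, ha, hab, hb, hK⟩ := hM
  have h1 : Function.Injective (f.lTensor K) := h K hK _ _ f g hF hf hfg hg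
  have h2 : Function.Injective (a.rTensor F) := Module.Flat.rTensor_preserves_injective_linearMap a ha
  have h3 : Function.Injective (a.rTensor N') := by
    have : (f.lTensor P) ∘ₗ (a.rTensor N') = (a.rTensor F) ∘ₗ (f.lTensor K) := by
      rw [LinearMap.lTensor_comp_rTensor, LinearMap.rTensor_comp_lTensor]
    have h4 : Function.Injective ((f.lTensor P) ∘ₗ (a.rTensor N')) := by
      rw [this]; exact h2.comp h1
    exact Function.Injective.of_comp h4
  exact lTensor_injective_of_exact_of_exact_of_rTensor_injective hab hb hfg' hg' h3
    (Module.Flat.lTensor_preserves_injective_linearMap f' hf')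

lemma chase_ideal {G F N : Type} [AddCommGroup G] [AddCommGroup F] [AddCommGroup N]
    [Module A G] [Module A F] [Module A N] (f : G →ₗ[A] F) (g : F →ₗ[A] N)
    (hfg : Function.Exact f g) (hg : Function.Surjective g) [Module.Flat A F] (I : Ideal A)
    (h : Function.Injective (f.rTensor (A ⧸ I))) :
    Function.Injective ((Submodule.subtype I).lTensor N) :=
  lTensor_injective_of_exact_of_exact_of_rTensor_injective
    hfg hg (g₂ := I.mkQ) (LinearMap.exact_subtype_mkQ I)
    (Submodule.mkQ_surjective I) h
    (Module.Flat.lTensor_preserves_injective_linearMap _ (Submodule.subtype_injective _))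

lemma exists_pres (N : Type) [AddCommGroup N] [Module A N] : ∃ (F G : Type) (_ : AddCommGroup F)
      (_ : Module A F) (_ : AddCommGroup G)
      (_ : Module A G) (f : G →ₗ[A] F) (g : F →ₗ[A] N), Module.Flat A F ∧ Function.Injective f ∧
      Function.Exact f g ∧ Function.Surjective g := by
  let g := Finsupp.linearCombination A (id : N → N)
  have hg : Function.Surjective g := Finsupp.linearCombination_id_surjective A N
  exact ⟨N →₀ A, LinearMap.ker g, inferInstance, inferInstance, inferInstance, inferInstance,
      (LinearMap.ker g).subtype, g, inferInstance, Submodule.subtype_injective _,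
      LinearMap.exact_subtype_ker_map g, hg⟩

lemma pure_zsp' {G F N : Type} [AddCommGroup G] [AddCommGroup F] [AddCommGroup N]
    [Module A G] [Module A F] [Module A N] (f : G →ₗ[A] F) (g : F →ₗ[A] N)
    (hf : Function.Injective f)
    (hfg : Function.Exact f g) (hg : Function.Surjective g)
    (z : ℕ → A) (k : ℕ) (hN : ModReg z k N) (x : G)
    (hx : f x ∈ zsp z k • (⊤ : Submodule A F)) : x ∈ zsp z k • (⊤ : Submodule A G) := by
  have h1 := pure_zsp g hg z k hN k le_rfl (f x) ((hfg _).2 ⟨x, rfl⟩) hx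
  rw [hfg.linearMap_ker_eq, ← Submodule.map_top, ← Submodule.map_smul''] at h1
  obtain ⟨y, hy, e⟩ := h1
  rwa [← hf e]

lemma inj_quot {G F : Type} [AddCommGroup G] [AddCommGroup F]
    [Module A G] [Module A F] (f : G →ₗ[A] F) (I : Ideal A)
    (h : ∀ x, f x ∈ I • (⊤ : Submodule A F) → x ∈ I • (⊤ : Submodule A G)) :
    Function.Injective (f.rTensor (A ⧸ I)) := by
  rw [← LinearMap.ker_eq_bot, LinearMap.ker_eq_bot']
  intro x hx
  obtain ⟨x, rfl⟩ :=
    (TensorProduct.tensorQuotEquivQuotSMul G I).symm.surjective x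
  obtain ⟨x, rfl⟩ := Submodule.Quotient.mk_surjective _ x
  rw [TensorProduct.tensorQuotEquivQuotSMul_symm_mk, LinearMap.rTensor_tmul] at hx
  have h3 := congrArg (TensorProduct.tensorQuotEquivQuotSMul F I) hx
  have h4 := TensorProduct.tensorQuotEquivQuotSMul_symm_mk I (f x)
  rw [LinearEquiv.symm_apply_eq] at h4
  rw [map_zero] at h3
  have h5 := h4.trans h3
  rw [Submodule.Quotient.mk_eq_zero] at h5
  rw [(Submodule.Quotient.mk_eq_zero _).2 (h x h5), map_zero]

lemma flat_of_QT {D : ℕ} (hA : ∀ (M : Type) [AddCommGroup M] [Module A M], Module.Finite A M →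
    fdLE A D M) (N : Type) [AddCommGroup N] [Module A N] (h : QT A D N) : Module.Flat A N := by
  rw [Module.Flat.iff_lTensor_injective']
  intro I
  obtain ⟨F, G, _, _, _, _, f, g, hF, hf, hfg, hg⟩ := exists_pres (A := A) N
  have h1 := h (A ⧸ I) (hA _ inferInstance) G F f g hF hf hfg hg
  rw [LinearMap.lTensor_inj_iff_rTensor_inj] at h1
  exact chase_ideal f g hfg hg I h1

lemma fdLE_of_QT {D : ℕ} (hA : ∀ (M : Type) [AddCommGroup M] [Module A M], Module.Finite A M →
    fdLE A D M) : ∀ (i j : ℕ) (N : Type) [AddCommGroup N] [Module A N], i + j = D → QT A j N →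
      fdLE A i N
  | 0, j, N, _, _, hij, h => by
    obtain rfl : j = D := by omega
    exact flat_of_QT hA N h
  | i + 1, j, N, _, _, hij, h => by
    let g := Finsupp.linearCombination A (id : N → N)
    have hg : Function.Surjective g := Finsupp.linearCombination_id_surjective A N
    exact ⟨N →₀ A, LinearMap.ker g, inferInstance, inferInstance, inferInstance, inferInstance,
      (LinearMap.ker g).subtype, g, inferInstance, Submodule.subtype_injective _,
      LinearMap.exact_subtype_ker_map g, hg, fdLE_of_QT hA i (j+1) _ (by omega)
      (QT_succ h (LinearMap.ker g).subtype g inferInstance (Submodule.subtype_injective _)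
      (LinearMap.exact_subtype_ker_map g) hg)⟩

lemma modReg_ker_succ {F N : Type} [AddCommGroup F] [AddCommGroup N] [Module A F] [Module A N]
    [Module.Flat A F] (π : F →ₗ[A] N) (hπ : Function.Surjective π) (z : ℕ → A) (k j : ℕ)
    (hjk : j < k)
    (hz : RReg z k) (hN : ModReg z j N) : ModReg z (j+1) (LinearMap.ker π) := by
  intro n hn u hu
  rw [mem_smul_top_ker] at hu ⊢
  apply pure_zsp π hπ z j hN n (by omega) _ u.2
  exact modReg_flat z k hz n (by omega) _ ((Submodule.smul_mono le_rfl le_top) hu)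

lemma flat_of_modReg [IsNoetherianRing A] [IsLocalRing A] (z : ℕ → A) (k : ℕ)
    (hm : zsp z k = maximalIdeal A) (M : Type) [AddCommGroup M] [Module A M] [Module.Finite A M]
    (hM : ModReg z k M) : Module.Flat A M := by
  have : Module.FinitePresentation A M := Module.finitePresentation_of_finite A M
  obtain ⟨F, G, _, _, _, _, f, g, hF, hf, hfg, hg⟩ := exists_pres (A := A) M
  have h2 : Function.Injective (f.rTensor (A ⧸ maximalIdeal A)) := by
    apply inj_quot
    intro x hx
    rw [← hm] at hx ⊢
    exact pure_zsp' f g hf hfg hg z k hM x hx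
  have h3 := chase_ideal f g hfg hg _ h2
  have := Module.free_of_maximalIdeal_rTensor_injective (R := A) (M := M)
    (by rwa [← LinearMap.lTensor_inj_iff_rTensor_inj])
  infer_instance

lemma fdLE_finite [IsNoetherianRing A] [IsLocalRing A] (z : ℕ → A) (k : ℕ)
    (hm : zsp z k = maximalIdeal A) (hz : RReg z k) : ∀ (i j : ℕ) (M : Type) [AddCommGroup M]
      [Module A M], i + j = k → Module.Finite A M → ModReg z j M → fdLE A i M
  | 0, j, M, _, _, hij, _, h => by
    obtain rfl : j = k := by omega
    exact flat_of_modReg z j hm M h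
  | i + 1, j, M, _, _, hij, hfin, h => by
    obtain ⟨n, g, hg⟩ := Module.Finite.exists_fin' A M
    exact ⟨Fin n → A, LinearMap.ker g, inferInstance, inferInstance, inferInstance, inferInstance,
      (LinearMap.ker g).subtype, g, inferInstance, Submodule.subtype_injective _,
      LinearMap.exact_subtype_ker_map g, hg, fdLE_finite z k hm hz i (j+1) _ (by omega)
      inferInstance (modReg_ker_succ g hg z k j (by omega) hz h)⟩

theorem fdLE_all [IsNoetherianRing A] [IsLocalRing A] (z : ℕ → A) (k : ℕ)
    (hm : zsp z k = maximalIdeal A) (hz : RReg z k) (N : Type) [AddCommGroup N] [Module A N] :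
    fdLE A k N :=
  fdLE_of_QT (D := k) (fun M _ _ hM => fdLE_finite z k hm hz k 0 M (by omega) hM
    (fun n hn => by omega)) k 0 N (by omega) (QT_zero N)

/-- big Cohen--Macaulay property for regular local base -/
theorem reg_flat [IsNoetherianRing A] [IsLocalRing A] [IsDomain A] (z : ℕ → A) (k : ℕ)
    (hm : zsp z k = maximalIdeal A) (hz : RReg z k) {L : Type} [Field L] [Algebra A L]
    [IsAlgClosed L] (p : ℕ) [Fact p.Prime] [CharP L p]
    (hinj : Function.Injective (algebraMap A L)) : ModReg z k (integralClosure A L) := by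
  have := global_flat p hinj k (fdLE_all z k hm hz _)
  exact modReg_flat z k hz

end FinFd

section smoothfield
open MvPolynomial

theorem h1_iff (R S : Type) [CommRing R] [CommRing S] [Algebra R S] :
    Subsingleton (Algebra.H1Cotangent R S) ↔
    ∀ f : MvPolynomial S R, aeval (id : S → S) f = 0 →
      (∀ i, aeval (id : S → S) (pderiv i f) = 0) →
      f ∈ (RingHom.ker (aeval (id : S → S) : MvPolynomial S R →ₐ[R] S)) ^ 2 := by
  set P := Algebra.Generators.self R S with hP
  have hk : P.toExtension.ker = RingHom.ker (aeval (id : S → S) : MvPolynomial S R →ₐ[R] S) := by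
    ext x
    rfl
  have key : ∀ x : P.toExtension.ker, P.toExtension.cotangentComplex (.mk x) = 0 ↔
      ∀ i, aeval (id : S → S) (pderiv i (x.1 : MvPolynomial S R)) = 0 := by
    intro x
    rw [Algebra.Extension.cotangentComplex_mk]
    constructor
    · intro h i
      have := P.cotangentSpaceBasis_repr_one_tmul x.1 i
      rw [h, map_zero] at this
      exact this.symm
    · intro h
      apply P.cotangentSpaceBasis.repr.injective
      ext i
      have := P.cotangentSpaceBasis_repr_one_tmul x.1 i
      rw [this, map_zero]
      exact h i
  change Subsingleton P.toExtension.H1Cotangent ↔ _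
  rw [Algebra.Extension.subsingleton_h1Cotangent, injective_iff_map_eq_zero]
  constructor
  · intro H f hf hd
    have hf' : f ∈ P.toExtension.ker := hf
    have := H (.mk ⟨f, hf'⟩) ((key ⟨f, hf'⟩).2 hd)
    rw [Algebra.Extension.Cotangent.mk_eq_zero_iff] at this
    exact this
  · intro H a ha
    obtain ⟨x, rfl⟩ := Algebra.Extension.Cotangent.mk_surjective a
    rw [Algebra.Extension.Cotangent.mk_eq_zero_iff]
    exact H x.1 x.2 ((key x).1 ha)

theorem fs_field (k K : Type) [Field k] [Field K] [Algebra k K] [PerfectField k] :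
    Algebra.FormallySmooth k K := by
  refine ⟨inferInstance, ?_⟩
  rw [h1_iff]
  intro f hf hd
  obtain ⟨s, q, rfl⟩ := exists_finset_rename f
  let E := IntermediateField.adjoin k (s : Set K)
  have : Algebra.EssFiniteType k E :=
    IntermediateField.essFiniteType_iff.2 ⟨s, rfl⟩
  have fs : Algebra.FormallySmooth k E := inferInstance
  have H := (h1_iff k E).1 fs.subsingleton_h1Cotangent
  let j : {x // x ∈ s} → E := fun x => ⟨x.1, IntermediateField.subset_adjoin _ _ x.2⟩
  have hj : Function.Injective j := fun a b h => Subtype.ext (congrArg (fun t : E => (t : K)) h)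
  have hcomp : ∀ g : MvPolynomial E k, aeval (id : K → K) (rename (fun e : E => (e : K)) g)
      = algebraMap E K (aeval (id : E → E) g) := by
    intro g
    rw [aeval_rename, ← aeval_algebraMap_apply]
    rfl
  have hq : rename (fun e : E => (e : K)) (rename j q) = rename (↑) q := by
    rw [rename_rename]; rfl
  have h0 := H (rename j q) ?_ ?_
  · rw [← hq]
    have hle : Ideal.map (rename (fun e : E => (e : K)) : MvPolynomial E k →ₐ[k] MvPolynomial K k)
        (RingHom.ker (aeval (id : E → E) : MvPolynomial E k →ₐ[k] E)) ≤
        RingHom.ker (aeval (id : K → K) : MvPolynomial K k →ₐ[k] K) := by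
      rw [Ideal.map_le_iff_le_comap]
      intro g hg
      have hg' : aeval (id : E → E) g = 0 := hg
      change aeval (id : K → K) (rename (fun e : E => (e : K)) g) = 0
      rw [hcomp, hg', map_zero]
    have := Ideal.mem_map_of_mem (rename (fun e : E => (e : K)) : MvPolynomial E k →ₐ[k] MvPolynomial K k) h0
    rw [Ideal.map_pow] at this
    exact Ideal.pow_right_mono hle 2 this
  · apply (algebraMap E K).injective
    rw [← hcomp, hq, hf, map_zero]
  · intro i
    apply (algebraMap E K).injective
    rw [← hcomp, map_zero, ← hd i, ← hq, pderiv_rename (Subtype.val_injective)]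

end smoothfield

section coeff

theorem exists_coeff (R : Type) [CommRing R] [IsLocalRing R] [IsAdicComplete (maximalIdeal R) R]
    (p : ℕ) [Fact p.Prime] [CharP R p] :
    ∃ g : ResidueField R →+* R, ∀ a, residue R (g a) = a := by
  let _ : Algebra (ZMod p) R := ZMod.algebra R p
  have fs : Algebra.FormallySmooth (ZMod p) (ResidueField R) := fs_field _ _
  obtain ⟨g, hg⟩ := Algebra.FormallySmooth.exists_mkₐ_comp_eq_of_isAdicComplete
    (R := ZMod p) (A := ResidueField R) (S := R) (I := maximalIdeal R) (AlgHom.id (ZMod p) (ResidueField R))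
  exact ⟨g.toRingHom, fun a => DFunLike.congr_fun hg a⟩

theorem exists_eval (R : Type) [CommRing R] [IsLocalRing R] [IsAdicComplete (maximalIdeal R) R]
    {K : Type} [Field K] (g : K →+* R) (d : ℕ) (w : Fin d → R) (hw : ∀ i, w i ∈ maximalIdeal R) :
    ∃ φ : MvPowerSeries (Fin d) K →+* R, (∀ a, φ (MvPowerSeries.C a) = g a) ∧
      ∀ i, φ (MvPowerSeries.X i) = w i := by
  let _ : WithIdeal R := ⟨maximalIdeal R⟩
  let _ : UniformSpace K := ⊥
  have : DiscreteTopology K := ⟨rfl⟩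
  have hI : IsAdic (maximalIdeal R) := rfl
  obtain ⟨h1, h2⟩ := hI.isAdicComplete_iff.1 inferInstance
  have hc : Continuous g := continuous_of_discreteTopology
  have he : MvPowerSeries.HasEval w := by
    refine ⟨fun s => ?_, ?_⟩
    · rw [IsTopologicallyNilpotent, hI.hasBasis_nhds_zero.tendsto_right_iff]
      intro n _
      filter_upwards [Filter.eventually_ge_atTop n] with k hk
      exact Ideal.pow_le_pow_right hk (Ideal.pow_mem_pow (hw s) k)
    · rw [Filter.cofinite_eq_bot]; exact Filter.tendsto_bot
  refine ⟨MvPowerSeries.eval₂Hom hc he, fun a => ?_, fun i => ?_⟩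
  · rw [MvPowerSeries.coe_eval₂Hom, MvPowerSeries.eval₂_C]
  · rw [MvPowerSeries.coe_eval₂Hom, MvPowerSeries.eval₂_X]

theorem mem_smul_top_pi {A : Type} [CommRing A] (J : Ideal A) (k : ℕ) (v : Fin k → A) :
    v ∈ (J • ⊤ : Submodule A (Fin k → A)) ↔ ∀ i, v i ∈ J := by
  constructor
  · intro h i
    refine Submodule.smul_induction_on h ?_ ?_
    · intro r hr n _
      exact J.mul_mem_right _ hr
    · intro x y hx hy
      exact J.add_mem hx hy
  · intro h
    rw [pi_eq_sum_univ' v]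
    refine Submodule.sum_mem _ fun i _ => ?_
    exact Submodule.smul_mem_smul (h i) trivial

theorem precomplete_pi {A : Type} [CommRing A] (I : Ideal A) [IsPrecomplete I A] (k : ℕ) :
    IsPrecomplete I (Fin k → A) := by
  refine ⟨fun f hf => ?_⟩
  have : ∀ i, ∃ L : A, ∀ n, f n i ≡ L [SMOD (I ^ n • ⊤ : Submodule A A)] := by
    intro i
    refine IsPrecomplete.prec' (I := I) (fun n => f n i) ?_
    intro m n hmn
    have := hf hmn
    rw [SModEq.sub_mem] at this ⊢
    rw [mem_smul_top_pi] at this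
    simpa using this i
  choose L hL using this
  refine ⟨L, fun n => ?_⟩
  rw [SModEq.sub_mem, mem_smul_top_pi]
  intro i
  have := hL i n
  rw [SModEq.sub_mem] at this
  simpa using this

theorem finite_of_complete {A N : Type} [CommRing A] [AddCommGroup N] [Module A N] (I : Ideal A)
    [IsPrecomplete I A] [IsHausdorff I N] (N0 : Submodule A N) (hfg : N0.FG)
    (h : N0 ⊔ I • ⊤ = ⊤) : Module.Finite A N := by
  obtain ⟨k, s, hs⟩ := Submodule.fg_iff_exists_fin_generating_family.1 hfg
  have := precomplete_pi I k
  have hsurj : Function.Surjective (Fintype.linearCombination A s) := by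
    apply surjective_of_mkQ_comp_surjective (I := I)
    intro q
    obtain ⟨y, rfl⟩ := Submodule.mkQ_surjective _ q
    have hy : y ∈ N0 ⊔ I • ⊤ := by rw [h]; trivial
    obtain ⟨a, ha, b, hb, rfl⟩ := Submodule.mem_sup.1 hy
    rw [← hs, ← Fintype.range_linearCombination] at ha
    obtain ⟨c, rfl⟩ := ha
    refine ⟨c, ?_⟩
    rw [LinearMap.comp_apply, map_add]
    rw [left_eq_add]
    simpa using hb
  exact Module.Finite.of_surjective _ hsurj

theorem finite_fg_sup {A R : Type} [CommRing A] [CommRing R] [IsLocalRing R] [IsNoetherianRing R]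
    [Algebra A R] (hres : ∀ r : R, ∃ a : A, r - algebraMap A R a ∈ maximalIdeal R) (k : ℕ) :
    ∃ N : Submodule A R, N.FG ∧ N ⊔ ((maximalIdeal R) ^ k).restrictScalars A = ⊤ := by
  induction k with
  | zero => exact ⟨⊥, Submodule.fg_bot, by rw [pow_zero, Ideal.one_eq_top]; simp⟩
  | succ k ih =>
    obtain ⟨N, hN, hT⟩ := ih
    obtain ⟨S, hS⟩ := (isNoetherianRing_iff_ideal_fg R).1 inferInstance (maximalIdeal R)
    refine ⟨Submodule.span A {1} ⊔ Submodule.span A (S : Set R) * N,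
      (Submodule.fg_span_singleton _).sup ((Submodule.fg_span S.finite_toSet).mul hN), ?_⟩
    rw [eq_top_iff]
    intro r _
    obtain ⟨a, ha⟩ := hres r
    have h1 : algebraMap A R a ∈ Submodule.span A ({1} : Set R) := by
      rw [Algebra.algebraMap_eq_smul_one]
      exact Submodule.smul_mem _ _ (Submodule.mem_span_singleton_self _)
    have h2 : ∀ m ∈ Ideal.span (S : Set R), m ∈ Submodule.span A (S : Set R) * N ⊔
        ((maximalIdeal R) ^ (k+1)).restrictScalars A := by
      intro m hm
      obtain ⟨f, -, rfl⟩ := Submodule.mem_span_finset.1 hm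
      refine sum_mem fun b hb => ?_
      have hf : f b ∈ N ⊔ ((maximalIdeal R) ^ k).restrictScalars A := by rw [hT]; trivial
      obtain ⟨u, hu, v, hv, huv⟩ := Submodule.mem_sup.1 hf
      rw [← huv, smul_eq_mul, add_mul, mul_comm u]
      refine add_mem (Submodule.mem_sup_left
        (Submodule.mul_mem_mul (Submodule.subset_span hb) hu)) (Submodule.mem_sup_right ?_)
      change v * b ∈ (maximalIdeal R) ^ (k+1)
      rw [pow_succ]
      exact Ideal.mul_mem_mul hv (hS ▸ Ideal.subset_span hb)
    have h3 := h2 _ (hS ▸ ha)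
    have : r = algebraMap A R a + (r - algebraMap A R a) := by ring
    rw [this]
    refine add_mem (Submodule.mem_sup_left (Submodule.mem_sup_left h1)) ?_
    exact (sup_le_sup_right (le_sup_right : _ ≤ Submodule.span A ({1} : Set R) ⊔ _) _ : _ ≤ _) h3

end coeff

section psring
open MvPowerSeries

variable {K : Type} [Field K] {d : ℕ}

noncomputable def zX (K : Type) [Field K] (d : ℕ) (i : ℕ) : MvPowerSeries (Fin d) K :=
  if h : i < d then X ⟨i, h⟩ else 0

theorem zX_lt {i : ℕ} (h : i < d) : zX K d i = X ⟨i, h⟩ := by simp [zX, h]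

theorem mem_zsp_zX (n : ℕ) (hn : n ≤ d) (f : MvPowerSeries (Fin d) K) :
    f ∈ zsp (zX K d) n ↔ ∀ m : Fin d →₀ ℕ, (∀ j : Fin d, (j : ℕ) < n → m j = 0) → coeff m f = 0 := by
  classical
  constructor
  · intro hf
    unfold zsp at hf
    refine Submodule.span_induction (p := fun f _ => ∀ m : Fin d →₀ ℕ,
      (∀ j : Fin d, (j : ℕ) < n → m j = 0) → coeff m f = 0) ?_ ?_ ?_ ?_ hf
    · rintro x ⟨i, hi, rfl⟩ m hm
      have hi' : i < n := by simpa using hi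
      rw [zX_lt (hi'.trans_le hn)]
      exact X_dvd_iff.1 dvd_rfl m (hm _ hi')
    · simp
    · intro x y _ _ hx hy m hm
      rw [map_add, hx m hm, hy m hm, add_zero]
    · intro a x hxm hx m hm
      rw [smul_eq_mul, coeff_mul]
      refine Finset.sum_eq_zero fun q hq => ?_
      rw [hx q.2, mul_zero]
      intro j hj
      have h1 := hm j hj
      rw [← Finset.HasAntidiagonal.mem_antidiagonal.1 hq, Finsupp.add_apply] at h1
      omega
  · induction n generalizing f with
    | zero => 
      intro h
      have : f = 0 := by ext m; simpa using h m (fun j hj => absurd hj (Nat.not_lt_zero _))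
      rw [this]; exact zero_mem _
    | succ n ih =>
      intro h
      have hnd : n < d := hn
      let r : MvPowerSeries (Fin d) K := fun m => if m ⟨n, hnd⟩ = 0 then coeff m f else 0
      have hr : ∀ m, coeff m r = if m ⟨n, hnd⟩ = 0 then coeff m f else 0 := fun m => rfl
      have h1 : X ⟨n, hnd⟩ ∣ f - r := by
        rw [X_dvd_iff]
        intro m hm
        rw [map_sub, hr, if_pos hm, sub_self]
      have h2 : r ∈ zsp (zX K d) n := by
        apply ih (by omega)
        intro m hm
        rw [hr]
        split_ifs with h0
        · apply h
          intro j hj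
          rcases Nat.lt_succ_iff_lt_or_eq.1 hj with hj | hj
          · exact hm j hj
          · have : j = ⟨n, hnd⟩ := Fin.ext hj
            rw [this, h0]
        · rfl
      rw [zsp_succ, zX_lt hnd, ← sub_add_cancel f r]
      exact add_mem (Ideal.mem_sup_left (Ideal.mem_span_singleton.2 h1)) (Ideal.mem_sup_right h2)

theorem zX_reg : RReg (zX K d) d := by
  intro n hn w hw
  rw [mem_zsp_zX n hn.le] at hw ⊢
  intro m hm
  have := hw (Finsupp.single ⟨n, hn⟩ 1 + m) ?_
  · rwa [zX_lt hn, X_def, coeff_add_monomial_mul, one_mul] at this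
  · intro j hj
    rw [Finsupp.add_apply, hm j hj, Finsupp.single_apply, if_neg]
    rintro rfl
    exact lt_irrefl _ hj

theorem zX_max : zsp (zX K d) d = maximalIdeal (MvPowerSeries (Fin d) K) := by
  ext f
  rw [mem_zsp_zX d le_rfl, IsLocalRing.mem_maximalIdeal, mem_nonunits_iff, MvPowerSeries.isUnit_iff_constantCoeff,
    isUnit_iff_ne_zero, not_not]
  constructor
  · intro h
    have := h 0 (fun _ _ => rfl)
    simpa using this
  · intro h m hm
    have : m = 0 := Finsupp.ext fun j => hm j j.2
    rw [this]; simpa using h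

theorem zX_span : zsp (zX K d) d = Ideal.span (Set.range (X : Fin d → MvPowerSeries (Fin d) K)) := by
  unfold zsp
  congr 1
  ext f
  constructor
  · rintro ⟨i, hi, rfl⟩
    have hi' : i < d := by simpa using hi
    exact ⟨⟨i, hi'⟩, (zX_lt hi').symm⟩
  · rintro ⟨i, rfl⟩
    exact ⟨i, by simp, zX_lt i.2⟩

theorem dim_ps : ringKrullDim (MvPowerSeries (Fin d) K) ≤ d := by
  classical
  rw [← IsLocalRing.maximalIdeal_height_eq_ringKrullDim]
  have h : maximalIdeal (MvPowerSeries (Fin d) K) =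
    Ideal.span ((Finset.univ.image (X : Fin d → MvPowerSeries (Fin d) K) : Finset _) : Set _) := by
    rw [← zX_max, zX_span]; simp
  have := Ideal.height_le_card_of_mem_minimalPrimes_span_finset
    (p := maximalIdeal (MvPowerSeries (Fin d) K)) (s := Finset.univ.image X) (by
      rw [← h, Ideal.minimalPrimes_eq_subsingleton_self]; rfl)
  have h2 : ((Finset.univ.image (X : Fin d → MvPowerSeries (Fin d) K)).card) ≤ d :=
    Finset.card_image_le.trans (by simp)
  have h3 := this.trans (Nat.cast_le.2 h2)
  exact_mod_cast h3

theorem dim_le_integral {A B : Type} [CommRing A] [CommRing B] [Algebra A B]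
    [Algebra.IsIntegral A B] : ringKrullDim B ≤ ringKrullDim A := by
  refine Order.krullDim_le_of_strictMono (fun P : PrimeSpectrum B => PrimeSpectrum.comap (algebraMap A B) P) ?_
  intro P Q h
  exact Ideal.IsIntegral.comap_lt_comap (R := A) (I := P.asIdeal) (J := Q.asIdeal) h

theorem inj_of_dim {A B : Type} [CommRing A] [IsDomain A] [CommRing B] [Algebra A B]
    [Algebra.IsIntegral A B] (d : ℕ) (hA : ringKrullDim A ≤ d) (hB : ringKrullDim B = d) :
    Function.Injective (algebraMap A B) := by
  rw [injective_iff_map_eq_zero]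
  intro r hr
  by_contra h0
  have h1 := ringKrullDim_quotient_succ_le_of_nonZeroDivisor (mem_nonZeroDivisors_of_ne_zero h0)
  let φ : A ⧸ Ideal.span {r} →+* B := Ideal.Quotient.lift _ (algebraMap A B) (by
    intro a ha
    obtain ⟨c, rfl⟩ := Ideal.mem_span_singleton.1 ha
    rw [map_mul, hr, zero_mul])
  let _ : Algebra (A ⧸ Ideal.span {r}) B := φ.toAlgebra
  have : IsScalarTower A (A ⧸ Ideal.span {r}) B := IsScalarTower.of_algebraMap_eq fun _ => rfl
  have : Algebra.IsIntegral (A ⧸ Ideal.span {r}) B := Algebra.IsIntegral.tower_top A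
  have h2 := dim_le_integral (A := A ⧸ Ideal.span {r}) (B := B)
  rw [hB] at h2
  have h3 := (add_le_add_left h2 1).trans (h1.trans hA)
  have h4 : d + 1 ≤ d := by exact_mod_cast h3
  omega

end psring

section P1
open MvPowerSeries

theorem mem_zsp_iff_sum {B : Type} [CommRing B] (z : ℕ → B) (n : ℕ) (u : B) :
    u ∈ zsp z n ↔ ∃ co : ℕ → B, u = ∑ i ∈ Finset.range n, z i * co i := by
  have h := mem_zsp_smul_top z n u
  rw [smul_eq_mul, Ideal.mul_top] at h
  exact h

theorem fin_over_ps (R : Type) [CommRing R] [IsNoetherianRing R] [IsLocalRing R]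
    [IsAdicComplete (maximalIdeal R) R] {K : Type} [Field K] (d : ℕ)
    [Algebra (MvPowerSeries (Fin d) K) R]
    (hres : ∀ r : R, ∃ a : MvPowerSeries (Fin d) K,
      r - algebraMap (MvPowerSeries (Fin d) K) R a ∈ maximalIdeal R)
    (hm : (Ideal.span (Set.range fun i : Fin d =>
      algebraMap (MvPowerSeries (Fin d) K) R (X i))).radical = maximalIdeal R) :
    Module.Finite (MvPowerSeries (Fin d) K) R := by
  set A := MvPowerSeries (Fin d) K
  set W := Ideal.span (Set.range fun i : Fin d => algebraMap A R (X i))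
  set I : Ideal A := Ideal.span (Set.range X)
  have hIW : I.map (algebraMap A R) = W := by
    rw [Ideal.map_span, ← Set.range_comp]; rfl
  have hWm : W ≤ maximalIdeal R := hm ▸ Ideal.le_radical
  have hIN : ∀ n x, x ∈ (I ^ n • ⊤ : Submodule A R) ↔ x ∈ W ^ n := by
    intro n x
    rw [← hIW, ← Ideal.map_pow, Ideal.smul_top_eq_map]; rfl
  have hh : IsHausdorff I R := by
    refine ⟨fun x hx => ?_⟩
    apply IsHausdorff.haus' (I := maximalIdeal R) x
    intro n
    have := hx n
    rw [SModEq.zero, hIN] at this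
    rw [SModEq.zero, smul_eq_mul, Ideal.mul_top]
    exact Ideal.pow_right_mono hWm n this
  obtain ⟨k, hk⟩ := Ideal.exists_radical_pow_le_of_fg W ((isNoetherianRing_iff_ideal_fg R).1 inferInstance _)
  obtain ⟨N, hN, hT⟩ := finite_fg_sup hres k
  refine finite_of_complete I N hN ?_
  refine eq_top_iff.2 (hT.ge.trans (sup_le_sup_left ?_ _))
  intro x hx
  have hx' : x ∈ maximalIdeal R ^ k := hx
  rw [← hm] at hx'
  have := (hIN 1 x).2 (by rw [pow_one]; exact hk hx')
  rwa [pow_one] at this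

theorem sop_regular_aux (R : Type) [CommRing R] [IsDomain R] [IsNoetherianRing R] [IsLocalRing R]
    [IsAdicComplete (maximalIdeal R) R] (p : ℕ) [Fact p.Prime] [CharP R p]
    (L : Type) [Field L] [IsAlgClosed L] [Algebra R L]
    (hRL : Function.Injective (algebraMap R L)) (d : ℕ) (w : ℕ → R) (hd : ringKrullDim R = d)
    (hw : (Ideal.span (Set.range fun i : Fin d => w i)).radical = maximalIdeal R) :
    RReg (fun i => algebraMap R (integralClosure R L) (w i)) d := by
  obtain ⟨g, hg⟩ := exists_coeff R p
  have hwm : ∀ i : Fin d, w i ∈ maximalIdeal R := fun i => 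
    hw ▸ Ideal.le_radical (Ideal.subset_span ⟨i, rfl⟩)
  obtain ⟨φ, hC, hX⟩ := exists_eval R g d (fun i => w i) hwm
  let A := MvPowerSeries (Fin d) (ResidueField R)
  let _ : Algebra A R := φ.toAlgebra
  have hres : ∀ r : R, ∃ a : A, r - algebraMap A R a ∈ maximalIdeal R := by
    intro r
    refine ⟨C (residue R r), ?_⟩
    change r - φ (C (residue R r)) ∈ _
    rw [hC, ← residue_eq_zero_iff, map_sub, hg, sub_self]
  have hfin : Module.Finite A R := fin_over_ps R d hres (by
    have : (fun i : Fin d => algebraMap A R (X i)) = fun i : Fin d => w i := funext hX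
    rw [this, hw])
  have hint : Algebra.IsIntegral A R := inferInstance
  have hdomA : IsDomain A := NoZeroDivisors.to_isDomain (MvPowerSeries _ _)
  have hnoeA : IsNoetherianRing A := inferInstanceAs (IsNoetherianRing (MvPowerSeries _ _))
  have hlocA : IsLocalRing A := inferInstanceAs (IsLocalRing (MvPowerSeries _ _))
  have hinj : Function.Injective (algebraMap A R) := inj_of_dim d dim_ps hd
  let _ : Algebra A L := ((algebraMap R L).comp (algebraMap A R)).toAlgebra
  have : IsScalarTower A R L := IsScalarTower.of_algebraMap_eq fun _ => rfl
  have hAL : Function.Injective (algebraMap A L) := hRL.comp hinj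
  have : CharP L p := charP_of_injective_ringHom hRL p
  have key := reg_flat (A := A) (zX (ResidueField R) d) d zX_max zX_reg (L := L) p hAL
  have hAR : ∀ u : L, u ∈ integralClosure A L ↔ u ∈ integralClosure R L := by
    intro u
    rw [mem_integralClosure_iff, mem_integralClosure_iff]
    exact ⟨fun h => h.tower_top, fun h => isIntegral_trans u h⟩
  have hz : ∀ n < d, algebraMap A L (zX (ResidueField R) d n) = algebraMap R L (w n) := by
    intro n hn
    rw [zX_lt hn, IsScalarTower.algebraMap_apply A R L]
    exact congrArg _ (hX ⟨n, hn⟩)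
  intro n hn u hu
  rw [mem_zsp_iff_sum] at hu ⊢
  obtain ⟨co, hco⟩ := hu
  have hco' : algebraMap R L (w n) * u.1 = ∑ i ∈ Finset.range n, algebraMap R L (w i) * (co i).1 := by
    have := congrArg (fun t : integralClosure R L => (t : L)) hco
    simpa using this
  have h1 := key n hn ⟨u.1, (hAR _).2 u.2⟩ ((mem_zsp_smul_top _ _ _).2
    ⟨fun i => ⟨(co i).1, (hAR _).2 (co i).2⟩, ?_⟩)
  · obtain ⟨c, hc⟩ := (mem_zsp_smul_top _ _ _).1 h1
    refine ⟨fun i => ⟨(c i).1, (hAR _).1 (c i).2⟩, ?_⟩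
    have h2 := congrArg (fun t : integralClosure A L => (t : L)) hc
    apply Subtype.ext
    simp only [AddSubmonoidClass.coe_finsetSum, Algebra.smul_def] at h2 ⊢
    rw [h2]
    refine Finset.sum_congr rfl fun i hi => ?_
    change algebraMap A L _ * (c i).1 = algebraMap R L (w i) * (c i).1
    rw [hz i ((Finset.mem_range.1 hi).trans hn)]
  · apply Subtype.ext
    simp only [AddSubmonoidClass.coe_finsetSum, Algebra.smul_def]
    change algebraMap A L _ * u.1 = _
    rw [hz n hn, hco']
    refine Finset.sum_congr rfl fun i hi => ?_
    change _ = algebraMap A L _ * (co i).1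
    rw [hz i ((Finset.mem_range.1 hi).trans hn)]

theorem sop_regular (R : Type) [CommRing R] [IsDomain R] [IsNoetherianRing R] [IsLocalRing R]
    [IsAdicComplete (maximalIdeal R) R] (p : ℕ) [Fact p.Prime] [CharP R p]
    (d : ℕ) (w : ℕ → R) (hd : ringKrullDim R = d)
    (hw : (Ideal.span (Set.range fun i : Fin d => w i)).radical = maximalIdeal R) :
    RReg (fun i => algebraMap R (RPlus R) (w i)) d := by
  refine sop_regular_aux R p (AlgebraicClosure (FractionRing R)) ?_ d w hd hw
  rw [IsScalarTower.algebraMap_eq R (FractionRing R) (AlgebraicClosure (FractionRing R))]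
  exact (algebraMap (FractionRing R) (AlgebraicClosure (FractionRing R))).injective.comp
    (IsFractionRing.injective R _)

end P1

section extsop

theorem dim_quot_lt {B : Type} [CommRing B] (z : B) (hz : ∀ P ∈ minimalPrimes B, z ∉ P) :
    ringKrullDim (B ⧸ Ideal.span {z}) + 1 ≤ ringKrullDim B := by
  by_cases hr' : Ideal.span {z} = ⊤
  · rw [hr', ringKrullDim_eq_bot_of_subsingleton]
    simp
  have : Nonempty (PrimeSpectrum.zeroLocus (R := B) (Ideal.span {z})) := by
    rwa [Set.nonempty_coe_sort, Set.nonempty_iff_ne_empty, ne_eq,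
      PrimeSpectrum.zeroLocus_empty_iff_eq_top]
  have := Ideal.Quotient.nontrivial_iff.mpr hr'
  have := (Ideal.Quotient.mk (Ideal.span {z})).domain_nontrivial
  rw [ringKrullDim_quotient, Order.krullDim_eq_iSup_length, ringKrullDim,
    Order.krullDim_eq_iSup_length, ← WithBot.coe_one, ← WithBot.coe_add,
    ENat.iSup_add, WithBot.coe_le_coe, iSup_le_iff]
  intro l
  obtain ⟨p, hp, hp'⟩ := Ideal.exists_minimalPrimes_le (J := l.head.1.asIdeal) bot_le
  let p' : PrimeSpectrum B := ⟨p, hp.1.1⟩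
  have hp' : p' < l.head := lt_of_le_of_ne hp' fun h => hz p hp
    (show z ∈ p by
      have h2 : z ∈ l.head.1.asIdeal := l.head.2 (Ideal.subset_span rfl)
      rw [← h] at h2
      exact h2)
  refine le_trans ?_ (le_iSup _ ((l.map Subtype.val (fun _ _ ↦ id)).cons p' hp'))
  have hlen : ((l.map Subtype.val (fun _ _ ↦ id)).cons p' hp').length = l.length + 1 :=
    RelSeries.cons_length _ _ _
  exact le_of_eq ((Nat.cast_succ (R := ℕ∞) l.length).symm.trans (congrArg _ hlen.symm))

theorem mem_zsp_of_lt {B : Type} [CommRing B] (z : ℕ → B) {i n : ℕ} (h : i < n) : z i ∈ zsp z n :=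
  Ideal.subset_span ⟨i, by simpa using h, rfl⟩

theorem zsp_le {B : Type} [CommRing B] {z : ℕ → B} {n : ℕ} {I : Ideal B} (h : ∀ i < n, z i ∈ I) :
    zsp z n ≤ I := by
  unfold zsp
  rw [Ideal.span_le]
  rintro _ ⟨i, hi, rfl⟩
  exact h i (by simpa using hi)

theorem dim_quot_zsp {R : Type} [CommRing R] [IsNoetherianRing R] [IsLocalRing R]
    (x : ℕ → R) (n d : ℕ) (hx : (zsp x d).radical = maximalIdeal R) :
    ringKrullDim (R ⧸ zsp x n) ≤ (d - n : ℕ) := by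
  classical
  by_cases hn : zsp x n = ⊤
  · rw [hn, ringKrullDim_eq_bot_of_subsingleton]; simp
  have := Ideal.Quotient.nontrivial_iff.mpr hn
  set B := R ⧸ zsp x n
  let π : R →+* B := Ideal.Quotient.mk _
  have hπ : Function.Surjective π := Ideal.Quotient.mk_surjective
  have : IsLocalRing B := IsLocalRing.of_surjective' π hπ
  rw [← IsLocalRing.maximalIdeal_height_eq_ringKrullDim]
  let s : Finset B := (Finset.range (d - n)).image fun i => π (x (n + i))
  have hcard : s.card ≤ d - n := Finset.card_image_le.trans (by simp)
  have hloc : maximalIdeal B = (maximalIdeal R).map π := by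
    have := IsLocalRing.map_maximalIdeal_of_surjective π hπ
    exact this.symm
  have hxm : ∀ i < d, x i ∈ maximalIdeal R := fun i hi => hx ▸ Ideal.le_radical (mem_zsp_of_lt x hi)
  have hmin : maximalIdeal B ∈ (Ideal.span (s : Set B)).minimalPrimes := by
    refine ⟨⟨inferInstance, ?_⟩, ?_⟩
    · rw [Ideal.span_le]
      intro b hb
      obtain ⟨i, hi, rfl⟩ := Finset.mem_image.1 (Finset.mem_coe.1 hb)
      rw [hloc]
      have hi' : i < d - n := by simpa using hi
      exact Ideal.mem_map_of_mem _ (hxm _ (by omega))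
    · rintro Q ⟨hQ, hsQ⟩ _
      rw [hloc, Ideal.map_le_iff_le_comap, ← hx]
      have hQ' : (Q.comap π).IsPrime := Ideal.IsPrime.comap _
      rw [hQ'.radical_le_iff]
      refine zsp_le fun i hi => ?_
      change π (x i) ∈ Q
      by_cases h : i < n
      · have : π (x i) = 0 := Ideal.Quotient.eq_zero_iff_mem.2 (mem_zsp_of_lt x h)
        rw [this]; exact zero_mem _
      · apply hsQ
        apply Ideal.subset_span
        refine Finset.mem_coe.2 (Finset.mem_image.2 ⟨i - n, ?_, ?_⟩)
        · rw [Finset.mem_range]; omega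
        · rw [Nat.add_sub_cancel' (not_lt.1 h)]
  have h1 := Ideal.height_le_card_of_mem_minimalPrimes_span_finset hmin
  have h3 := h1.trans (Nat.cast_le.2 hcard)
  exact WithBot.coe_le_coe.2 h3

theorem ext_sop {R : Type} [CommRing R] [IsNoetherianRing R] [IsLocalRing R]
    (x : ℕ → R) (n d : ℕ) (hnd : n ≤ d) (hx : (zsp x d).radical = maximalIdeal R)
    (z : R) (hzm : z ∈ maximalIdeal R) (hz : ∀ P ∈ (zsp x n).minimalPrimes, z ∉ P) :
    n < d ∧ ∃ w : ℕ → R, (∀ i < n, w i = x i) ∧ w n = z ∧ (zsp w d).radical = maximalIdeal R := by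
  classical
  have hB := dim_quot_zsp x n d hx
  have hxm : ∀ i < d, x i ∈ maximalIdeal R := fun i hi => hx ▸ Ideal.le_radical (mem_zsp_of_lt x hi)
  have hJm : zsp x n ≤ maximalIdeal R := zsp_le fun i hi => hxm i (hi.trans_le hnd)
  let π1 : R →+* R ⧸ zsp x n := Ideal.Quotient.mk _
  have hπ1 : Function.Surjective π1 := Ideal.Quotient.mk_surjective
  have hC := dim_quot_lt (π1 z) (by
    intro P hP hzP
    refine hz (P.comap π1) ?_ hzP
    rw [Ideal.minimalPrimes_eq_comap]
    exact ⟨P, hP, rfl⟩)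
  let π2 : (R ⧸ zsp x n) →+* ((R ⧸ zsp x n) ⧸ Ideal.span {π1 z}) := Ideal.Quotient.mk _
  have hπ2 : Function.Surjective π2 := Ideal.Quotient.mk_surjective
  let π := π2.comp π1
  have hπ : Function.Surjective π := hπ2.comp hπ1
  have hker : ∀ r, π r = 0 → r ∈ zsp x n ⊔ Ideal.span {z} := by
    intro r hr
    obtain ⟨c, hc⟩ := Ideal.mem_span_singleton.1 (Ideal.Quotient.eq_zero_iff_mem.1 hr)
    obtain ⟨c, rfl⟩ := hπ1 c
    rw [← map_mul] at hc
    have h2 : r - z * c ∈ zsp x n := Ideal.Quotient.eq.1 hc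
    have : r = (r - z * c) + z * c := by ring
    rw [this]
    exact add_mem (Ideal.mem_sup_left h2) (Ideal.mem_sup_right
      (Ideal.mul_mem_right _ _ (Ideal.mem_span_singleton_self _)))
  set C := (R ⧸ zsp x n) ⧸ Ideal.span {π1 z}
  have hnt : Nontrivial C := by
    refine ⟨π 1, 0, fun h => ?_⟩
    have h1 := hker 1 h
    have : zsp x n ⊔ Ideal.span {z} ≤ maximalIdeal R :=
      sup_le hJm ((Ideal.span_singleton_le_iff_mem _).2 hzm)
    exact (Ideal.ne_top_iff_one _).1 (maximalIdeal.isMaximal R).ne_top (this h1)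
  have : IsLocalRing C := IsLocalRing.of_surjective' π hπ
  obtain ⟨s, hs, hcard⟩ := Ideal.exists_finset_card_eq_height_of_isNoetherianRing (maximalIdeal C)
  have hdimC : ringKrullDim C = (s.card : ℕ∞) := by
    rw [← IsLocalRing.maximalIdeal_height_eq_ringKrullDim, hcard]
  rw [hdimC] at hC
  have hle : s.card + 1 ≤ d - n := by
    have := hC.trans hB
    have h2 : (((s.card + 1 : ℕ) : ℕ∞) : WithBot ℕ∞) ≤ ((d - n : ℕ) : ℕ∞) := by
      refine le_trans (le_of_eq ?_) this
      push_cast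
      rfl
    exact Nat.cast_le.1 (WithBot.coe_le_coe.1 h2)
  refine ⟨by omega, ?_⟩
  have hπ' := hπ
  choose σ hσ using hπ'
  let e := s.equivFin
  let w : ℕ → R := fun i => if i < n then x i else if i = n then z else
    if h : i - n - 1 < s.card then σ (e.symm ⟨i - n - 1, h⟩) else 0
  have hw1 : ∀ i < n, w i = x i := fun i hi => by simp [w, hi]
  have hw2 : w n = z := by simp [w]
  have hw3 : ∀ j (h : j < s.card), w (n + 1 + j) = σ (e.symm ⟨j, h⟩) := by
    intro j h
    have h1 : ¬ (n + 1 + j < n) := by omega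
    have h2 : ¬ (n + 1 + j = n) := by omega
    have h3 : n + 1 + j - n - 1 = j := by omega
    simp only [w, if_neg h1, if_neg h2, h3, dif_pos h]
  have hloc : ∀ r, r ∈ maximalIdeal R ↔ π r ∈ maximalIdeal C := by
    intro r
    have h0 : ((maximalIdeal C).comap π).IsMaximal :=
      Ideal.comap_isMaximal_of_surjective π hπ
    have h1 : (maximalIdeal C).comap π = maximalIdeal R := IsLocalRing.eq_maximalIdeal h0
    rw [← h1]; rfl
  refine ⟨w, hw1, hw2, le_antisymm ?_ ?_⟩
  · rw [(maximalIdeal.isMaximal R).isPrime.radical_le_iff]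
    refine zsp_le fun i hi => ?_
    by_cases h1 : i < n
    · rw [hw1 i h1]; exact hxm i hi
    by_cases h2 : i = n
    · rw [h2, hw2]; exact hzm
    by_cases h3 : i - n - 1 < s.card
    · have h4 : i = n + 1 + (i - n - 1) := by omega
      rw [h4, hw3 _ h3, hloc, hσ]
      exact hs.1.2 (Ideal.subset_span (e.symm _).2)
    · have : w i = 0 := by simp only [w, if_neg h1, if_neg h2, dif_neg h3]
      rw [this]; exact zero_mem _
  · intro r hr
    have hrad : maximalIdeal C ≤ (Ideal.span (s : Set C)).radical := by
      rw [Ideal.radical_eq_sInf]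
      refine le_sInf ?_
      rintro Q ⟨hQ1, hQ2⟩
      exact hs.2 ⟨hQ2, hQ1⟩ (IsLocalRing.le_maximalIdeal hQ2.ne_top)
    obtain ⟨k, hk⟩ := hrad ((hloc r).1 hr)
    have hsp : Ideal.span (s : Set C) ≤ (zsp w d).map π := by
      rw [Ideal.span_le]
      intro c hc
      have h1 := hw3 (e ⟨c, hc⟩) (e ⟨c, hc⟩).2
      have h2 : π (w (n + 1 + (e ⟨c, hc⟩ : ℕ))) = c := by
        rw [h1, hσ]; simp
      have h3 := (e ⟨c, hc⟩).2
      have h4 : π (w (n + 1 + (e ⟨c, hc⟩ : ℕ))) ∈ (zsp w d).map π :=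
        Ideal.mem_map_of_mem π (mem_zsp_of_lt w (by omega))
      rw [h2] at h4
      exact h4
    obtain ⟨t, ht, htk⟩ := (Ideal.mem_map_iff_of_surjective π hπ).1 (hsp hk)
    have h5 := hker (r ^ k - t) (by rw [map_sub, map_pow, htk, sub_self])
    have h6 : zsp x n ⊔ Ideal.span {z} ≤ zsp w d := by
      refine sup_le (zsp_le fun i hi => ?_) ((Ideal.span_singleton_le_iff_mem _).2 ?_)
      · rw [← hw1 i hi]; exact mem_zsp_of_lt w (by omega)
      · rw [← hw2]; exact mem_zsp_of_lt w (by omega)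
    refine ⟨k, ?_⟩
    have := add_mem (h6 h5) ht
    rwa [sub_add_cancel] at this

end extsop

section final

theorem min_prime_witness {R : Type} [CommRing R] {J P : Ideal R} (hP : P ∈ J.minimalPrimes)
    {y : R} (hy : y ∈ P) : ∃ s ∉ P, ∃ k, s * y ^ k ∈ J := by
  have hPp : P.IsPrime := hP.1.1
  by_contra hcon
  push Not at hcon
  have hdis : Disjoint (J : Set R) ((P.primeCompl ⊔ Submonoid.powers y : Submonoid R) : Set R) := by
    rw [Set.disjoint_left]
    intro a ha ha2
    obtain ⟨s, hs, t, ⟨k, rfl⟩, rfl⟩ := Submonoid.mem_sup.1 ha2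
    exact hcon s hs k ha
  obtain ⟨Q, hQ, hJQ, hQd⟩ := Ideal.exists_le_prime_disjoint J _ hdis
  rw [Set.disjoint_left] at hQd
  have hQP : Q ≤ P := by
    intro a ha
    by_contra h
    exact hQd ha (Submonoid.mem_sup_left (show a ∈ P.primeCompl from h))
  exact hQd (hP.2 ⟨hQ, hJQ⟩ hQP hy) (Submonoid.mem_sup_right (Submonoid.mem_powers y))

theorem exists_avoid {R : Type} [CommRing R] [IsNoetherianRing R] (J : Ideal R) (y : R) :
    ∃ N : ℕ, 0 < N ∧ ∃ s r : R, s * y ^ N ∈ J ∧ ∀ P ∈ J.minimalPrimes, s + r * y ^ N ∉ P := by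
  classical
  let f : ℕ →o Ideal R := ⟨fun k => J.colon {y ^ k}, by
    intro a b hab t ht
    rw [Submodule.mem_colon_singleton, smul_eq_mul] at ht ⊢
    have : t * y ^ b = (t * y ^ a) * y ^ (b - a) := by
      rw [mul_assoc, ← pow_add, Nat.add_sub_cancel' hab]
    rw [this]
    exact Ideal.mul_mem_right _ _ ht⟩
  have hf : ∀ k t, t ∈ f k ↔ t * y ^ k ∈ J := fun k t => by
    change t ∈ J.colon {y ^ k} ↔ _
    rw [Submodule.mem_colon_singleton, smul_eq_mul]
  obtain ⟨N0, hN0⟩ := monotone_stabilizes_iff_noetherian.2 (inferInstance : IsNoetherian R R) f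
  have hfin := J.finite_minimalPrimes_of_isNoetherianRing R
  have hN : ∀ k, f k ≤ f (N0 + 1) := by
    intro k
    rcases le_total k (N0 + 1) with h | h
    · exact f.mono h
    · rw [← hN0 k (by omega), hN0 (N0 + 1) (by omega)]
  refine ⟨N0 + 1, by omega, ?_⟩
  set N := N0 + 1 with hNdef
  have hI : ∀ P ∈ J.minimalPrimes, ¬ (f N ⊔ Ideal.span {y ^ N} ≤ P) := by
    intro P hP hle
    have hPp : P.IsPrime := hP.1.1
    have hyP : y ∈ P := hPp.mem_of_pow_mem N
      (hle (Ideal.mem_sup_right (Ideal.mem_span_singleton_self _)))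
    obtain ⟨s, hs, k, hk⟩ := min_prime_witness hP hyP
    exact hs (hle (Ideal.mem_sup_left (hN k ((hf k s).2 hk))))
  have hex : ∃ z ∈ f N ⊔ Ideal.span {y ^ N}, ∀ P ∈ J.minimalPrimes, z ∉ P := by
    by_contra hcon
    push Not at hcon
    have hsub : ((f N ⊔ Ideal.span {y ^ N} : Ideal R) : Set R) ⊆
        ⋃ i ∈ (↑hfin.toFinset : Set (Ideal R)), ((id i : Ideal R) : Set R) := by
      intro z hz
      obtain ⟨P, hP, hzP⟩ := hcon z hz
      exact Set.mem_biUnion (by simpa using hP) hzP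
    obtain ⟨P, hP, hle⟩ := (Ideal.subset_union_prime ⊥ ⊥ (fun i hi _ _ => by
      have : i ∈ J.minimalPrimes := by simpa using hi
      exact this.1.1)).1 hsub
    exact hI P (by simpa using hP) hle
  obtain ⟨z, hz, hzP⟩ := hex
  obtain ⟨s, hs, t, ht, rfl⟩ := Submodule.mem_sup.1 hz
  obtain ⟨r, rfl⟩ := Ideal.mem_span_singleton'.1 ht
  exact ⟨s, r, (hf N s).1 hs, hzP⟩

theorem span_fin_eq_zsp {B : Type} [CommRing B] {d : ℕ} (w : ℕ → B) (x : Fin d → B)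
    (h : ∀ i : Fin d, x i = w i) {n : ℕ} (hnd : n ≤ d) :
    Ideal.span (x '' {i | (i : ℕ) < n}) = zsp w n := by
  apply le_antisymm
  · rw [Ideal.span_le]
    rintro _ ⟨i, hi, rfl⟩
    rw [h i]
    exact mem_zsp_of_lt w hi
  · refine zsp_le fun i hi => Ideal.subset_span ⟨⟨i, hi.trans_le hnd⟩, hi, h _⟩

theorem span_range_eq_zsp {B : Type} [CommRing B] {d : ℕ} (w : ℕ → B) (x : Fin d → B)
    (h : ∀ i : Fin d, x i = w i) : Ideal.span (Set.range x) = zsp w d := by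
  rw [← span_fin_eq_zsp w x h le_rfl]
  congr 1
  ext b
  constructor
  · rintro ⟨i, rfl⟩; exact ⟨i, i.2, rfl⟩
  · rintro ⟨i, _, rfl⟩; exact ⟨i, rfl⟩

end final

/-- For a `d`-dimensional complete local domain `R` of characteristic `p`,
there is `N₀ ≥ 1` with `(x₁, …, xₙ)R⁺ = 𝔞 ∩ 𝔟`, where `𝔞 = (x₁, …, xₙ, y^{N₀})R⁺` and
`𝔟 = (x₁, …, xₙ)R⁺ : y^{N₀}`. -/
theorem stmt18 (R : Type) [CommRing R] [IsDomain R] [IsNoetherianRing R] [IsLocalRing R]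
    [IsAdicComplete (maximalIdeal R) R]
    (p : ℕ) [Fact p.Prime] [CharP R p]
    (d : ℕ) (x : Fin d → R) (hx : IsSOP R x)
    (n : ℕ) (hn1 : 1 ≤ n) (hnd : n ≤ d) (y : R) :
    ∃ N₀ : ℕ, 0 < N₀ ∧
      Ideal.span (⇑(algebraMap R (RPlus R)) '' (x '' {i | (i : ℕ) < n})) =
        (Ideal.span (⇑(algebraMap R (RPlus R)) '' (x '' {i | (i : ℕ) < n})) ⊔
            Ideal.span {algebraMap R (RPlus R) y ^ N₀}) ⊓
          (Ideal.span (⇑(algebraMap R (RPlus R)) '' (x '' {i | (i : ℕ) < n}))).colon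
            (Ideal.span {algebraMap R (RPlus R) y ^ N₀}) := by
  classical
  let x' : ℕ → R := fun i => if h : i < d then x ⟨i, h⟩ else 0
  have hxx' : ∀ i : Fin d, x i = x' i := fun i => by simp [x']
  have hrad : (zsp x' d).radical = maximalIdeal R := by
    rw [← span_range_eq_zsp x' x hxx']; exact hx.2
  have hJ : Ideal.span (⇑(algebraMap R (RPlus R)) '' (x '' {i | (i : ℕ) < n})) =
      zsp (fun i => algebraMap R (RPlus R) (x' i)) n := by
    rw [← span_fin_eq_zsp (fun i => algebraMap R (RPlus R) (x' i))
      (fun i : Fin d => algebraMap R (RPlus R) (x i)) (fun i => by rw [hxx']) hnd,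
      Set.image_image]
  have hmap : ∀ a ∈ zsp x' n, algebraMap R (RPlus R) a ∈
      zsp (fun i => algebraMap R (RPlus R) (x' i)) n := by
    intro a ha
    have : zsp x' n ≤ (zsp (fun i => algebraMap R (RPlus R) (x' i)) n).comap
        (algebraMap R (RPlus R)) :=
      zsp_le fun i hi => mem_zsp_of_lt (fun i => algebraMap R (RPlus R) (x' i)) hi
    exact this ha
  obtain ⟨N, hN, s, r, hs, hz⟩ := exists_avoid (zsp x' n) y
  refine ⟨N, hN, ?_⟩
  rw [hJ]
  set J := zsp (fun i => algebraMap R (RPlus R) (x' i)) n with hJdef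
  set Y := algebraMap R (RPlus R) y with hY
  have hreg : ∀ v, algebraMap R (RPlus R) (s + r * y ^ N) * v ∈ J → v ∈ J := by
    intro v hv
    by_cases hu : IsUnit (s + r * y ^ N)
    · exact (Ideal.unit_mul_mem_iff_mem J (hu.map (algebraMap R (RPlus R)))).1 hv
    · obtain ⟨hlt, w, hw1, hw2, hw3⟩ := ext_sop x' n d hnd hrad (s + r * y ^ N)
        ((IsLocalRing.mem_maximalIdeal _).2 hu) hz
      have hR := sop_regular R p d w hx.1 (by
        rw [span_range_eq_zsp w _ (fun i => rfl)]; exact hw3)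
      have hJ2 : zsp (fun i => algebraMap R (RPlus R) (w i)) n = J :=
        zsp_congr (fun i hi => by rw [hw1 i hi])
      have := hR n hlt v
      rw [hJ2] at this
      apply this
      change algebraMap R (RPlus R) (w n) * v ∈ J
      rw [hw2]
      exact hv
  have hkey : ∀ u, Y ^ N * (Y ^ N * u) ∈ J → Y ^ N * u ∈ J := by
    intro u hu
    apply hreg
    have h1 := hmap _ hs
    rw [map_mul, map_pow] at h1
    rw [map_add, map_mul, map_pow]
    have : (algebraMap R (RPlus R) s + algebraMap R (RPlus R) r * Y ^ N) * (Y ^ N * u) =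
        u * (algebraMap R (RPlus R) s * Y ^ N) +
          algebraMap R (RPlus R) r * (Y ^ N * (Y ^ N * u)) := by ring
    rw [this]
    exact add_mem (Ideal.mul_mem_left _ _ h1) (Ideal.mul_mem_left _ _ hu)
  apply le_antisymm
  · refine le_inf le_sup_left fun a ha => ?_
    rw [Submodule.mem_colon]
    intro b _
    exact Ideal.mul_mem_right _ _ ha
  · rintro a ⟨ha1, ha2⟩
    obtain ⟨j, hj, t, ht, rfl⟩ := Submodule.mem_sup.1 ha1
    obtain ⟨u, rfl⟩ := Ideal.mem_span_singleton'.1 ht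
    have h2 := Submodule.mem_colon.1 ha2 (Y ^ N) (Ideal.mem_span_singleton_self _)
    rw [smul_eq_mul] at h2
    refine add_mem hj ?_
    rw [mul_comm u]
    apply hkey
    have : Y ^ N * (Y ^ N * u) = (j + u * Y ^ N) * Y ^ N - j * Y ^ N := by ring
    rw [this]
    exact sub_mem h2 (Ideal.mul_mem_right _ _ hj)
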